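/- arXiv:1602.02688 — 3 statements merged into one kernel-verified Lean document; each statement's English description precedes it below -/
import Mathlib

section
/- Let X be an infinite set and let G be a subgroup of Sym(X) fully containing FAlt(X). If G is a torsion group (every element of G has finite order), then G has the R_∞ property. -/
/-- `FAlt X`: the subgroup of `Equiv.Perm X` generated by all 3-cycles, i.e. by those
permutations whose support has exactly 3 elements. -/
def FAlt (X : Type*) : Subgroup (Equiv.Perm X) :=
  Subgroup.closure {σ : Equiv.Perm X | {x | σ x ≠ x}.ncard = 3}

/-- Twisted conjugacy: `a` and `b` are `φ`-twisted conjugate if `(φ x)⁻¹ * a * x = b`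
for some `x`. -/
def TwistedConj {G : Type*} [Group G] (φ : G ≃* G) (a b : G) : Prop :=
  ∃ x : G, (φ x)⁻¹ * a * x = b

/-- A group has the `R∞` property if every automorphism has infinitely many twisted
conjugacy classes. -/
def RInfinity (G : Type*) [Group G] : Prop :=
  ∀ φ : G ≃* G, Infinite (Quot (TwistedConj φ))

open Classical in
/-- The cycle a → b → c → a. -/
noncomputable def cyc3 {X : Type*} (a b c : X) : Equiv.Perm X :=
  Equiv.swap a b * Equiv.swap b c

def Dist3 {X : Type*} (a b c : X) : Prop := a ≠ b ∧ b ≠ c ∧ a ≠ c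

/-- σ is a 3-cycle. -/
def Is3 {X : Type*} (σ : Equiv.Perm X) : Prop :=
  ∃ a b c, Dist3 a b c ∧ σ = cyc3 a b c

theorem cyc3_apply {X : Type*} [DecidableEq X] {a b c : X} (h : Dist3 a b c) (x : X) :
    cyc3 a b c x = if x = a then b else if x = b then c else if x = c then a else x := by
  obtain ⟨h1, h2, h3⟩ := h
  simp only [cyc3, Equiv.Perm.mul_apply, Equiv.swap_apply_def]
  grind

theorem eq_cyc3 {X : Type*} {a b c : X} (h : Dist3 a b c) {σ : Equiv.Perm X}
    (h1 : σ a = b) (h2 : σ b = c) (h3 : σ c = a)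
    (h4 : ∀ x, x ≠ a → x ≠ b → x ≠ c → σ x = x) : σ = cyc3 a b c := by
  classical
  ext x
  rw [cyc3_apply h]
  grind

theorem is3_iff {X : Type*} (σ : Equiv.Perm X) :
    {x | σ x ≠ x}.ncard = 3 ↔ Is3 σ := by
  classical
  rw [Set.ncard_eq_three]
  constructor
  · rintro ⟨a, b, c, h1, h2, h3, h⟩
    have hs : ∀ x, σ x ≠ x ↔ (x = a ∨ x = b ∨ x = c) := fun x => by
      have := Set.ext_iff.1 h x
      simpa using this
    have inj : ∀ x y, σ x = σ y → x = y := fun x y h => σ.injective h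
    have ha := hs (σ a)
    have hb := hs (σ b)
    have hc := hs (σ c)
    have h4 : ∀ x, x ≠ a → x ≠ b → x ≠ c → σ x = x := by grind
    by_cases hab : σ a = b
    · have : σ b = c := by grind
      have : σ c = a := by grind
      exact ⟨a, b, c, ⟨h1, h3, h2⟩, eq_cyc3 ⟨h1, h3, h2⟩ (by assumption) (by assumption) (by assumption) h4⟩
    · have : σ a = c := by grind
      have : σ c = b := by grind
      have : σ b = a := by grind
      exact ⟨a, c, b, ⟨h2, h3.symm, h1⟩, eq_cyc3 ⟨h2, h3.symm, h1⟩ (by assumption) (by assumption) (by assumption) (by grind)⟩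
  · rintro ⟨a, b, c, h, rfl⟩
    refine ⟨a, b, c, h.1, h.2.2, h.2.1, ?_⟩
    ext x
    simp only [Set.mem_ofPred_eq, cyc3_apply h, Set.mem_insert_iff, Set.mem_singleton_iff]
    obtain ⟨h1, h2, h3⟩ := h
    grind

theorem cyc3_mem {X : Type*} {a b c : X} (h : Dist3 a b c) : cyc3 a b c ∈ FAlt X :=
  Subgroup.subset_closure ((is3_iff _).2 ⟨a, b, c, h, rfl⟩)

theorem cyc3_rot {X : Type*} {a b c : X} (h : Dist3 a b c) : cyc3 a b c = cyc3 b c a := by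
  classical
  have h' : Dist3 b c a := ⟨h.2.1, h.2.2.symm, h.1.symm⟩
  ext x
  rw [cyc3_apply h, cyc3_apply h']
  obtain ⟨h1, h2, h3⟩ := h
  grind

theorem Dist3.rot {X : Type*} {a b c : X} (h : Dist3 a b c) : Dist3 b c a :=
  ⟨h.2.1, h.2.2.symm, h.1.symm⟩

theorem Dist3.map {X : Type*} {a b c : X} (h : Dist3 a b c) (σ : Equiv.Perm X) :
    Dist3 (σ a) (σ b) (σ c) :=
  ⟨fun e => h.1 (σ.injective e), fun e => h.2.1 (σ.injective e), fun e => h.2.2 (σ.injective e)⟩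

theorem cyc3_conj {X : Type*} {a b c : X} (h : Dist3 a b c) (σ : Equiv.Perm X) :
    σ * cyc3 a b c * σ⁻¹ = cyc3 (σ a) (σ b) (σ c) := by
  classical
  refine eq_cyc3 (h.map σ) ?_ ?_ ?_ ?_
  · obtain ⟨h1, h2, h3⟩ := id h
    simp [cyc3_apply h]
  · obtain ⟨h1, h2, h3⟩ := id h
    simp [cyc3_apply h, h1.symm]
  · obtain ⟨h1, h2, h3⟩ := id h
    simp [cyc3_apply h, h2.symm, h3.symm]
  · intro x ha hb hc
    have h1 : σ⁻¹ x ≠ a := fun e => ha (by simp [← e])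
    have h2 : σ⁻¹ x ≠ b := fun e => hb (by simp [← e])
    have h3 : σ⁻¹ x ≠ c := fun e => hc (by simp [← e])
    simp only [Equiv.Perm.mul_apply]
    rw [cyc3_apply h, if_neg h1, if_neg h2, if_neg h3]
    simp

theorem cyc3_inv {X : Type*} {a b c : X} : (cyc3 a b c)⁻¹ = cyc3 c b a := by
  simp [cyc3, mul_inv_rev, Equiv.swap_comm]

theorem Is3.conj {X : Type*} {p : Equiv.Perm X} (h : Is3 p) (σ : Equiv.Perm X) :
    Is3 (σ * p * σ⁻¹) := by
  obtain ⟨a, b, c, h, rfl⟩ := h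
  exact ⟨_, _, _, h.map σ, cyc3_conj h σ⟩

theorem Is3.inv {X : Type*} {p : Equiv.Perm X} (h : Is3 p) : Is3 p⁻¹ := by
  obtain ⟨a, b, c, h, rfl⟩ := h
  exact ⟨c, b, a, ⟨h.2.1.symm, h.1.symm, h.2.2.symm⟩, cyc3_inv⟩

theorem pair_common {X : Type*} {a b c e f : X} (h : Dist3 a b c) (h' : Dist3 a e f) :
    (cyc3 a b c * cyc3 a e f) ^ 2 = 1 ∨ (cyc3 a b c * cyc3 a e f) ^ 3 = 1 ∨
    (cyc3 a b c * cyc3 a e f) ^ 5 = 1 := by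
  classical
  have hw : ∀ x, (cyc3 a b c * cyc3 a e f) x = 
     (fun y => if y = a then b else if y = b then c else if y = c then a else y)
     (if x = a then e else if x = e then f else if x = f then a else x) := fun x => by
    rw [Equiv.Perm.mul_apply, cyc3_apply h, cyc3_apply h']
  generalize (cyc3 a b c * cyc3 a e f) = w at hw
  obtain ⟨h1, h2, h3⟩ := h
  obtain ⟨h4, h5, h6⟩ := h'
  have e2 : (∀ x, w (w x) = x) → w ^ 2 = 1 := fun h => by ext x; simp [pow_succ, h]
  have e3 : (∀ x, w (w (w x)) = x) → w ^ 3 = 1 := fun h => by ext x; simp [pow_succ, h]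
  have e5 : (∀ x, w (w (w (w (w x)))) = x) → w ^ 5 = 1 := fun h => by ext x; simp [pow_succ, h]
  have wa := hw a
  have wb := hw b
  have wc := hw c
  have we := hw e
  have wf := hw f
  have wx : ∀ x, x = a ∨ x = b ∨ x = c ∨ x = e ∨ x = f ∨ w x = x := by
    intro x; have := hw x; grind
  clear hw
  by_cases he : e = b
  · by_cases hf : f = c
    · right; left; apply e3; intro x; clear e2 e3 e5; rcases wx x with h | h | h | h | h | h <;> grind
    · left; apply e2; intro x; clear e2 e3 e5; rcases wx x with h | h | h | h | h | h <;> grind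
  by_cases he' : e = c
  · by_cases hf : f = b
    · left; apply e2; intro x; clear e2 e3 e5; rcases wx x with h | h | h | h | h | h <;> grind
    · right; left; apply e3; intro x; clear e2 e3 e5; rcases wx x with h | h | h | h | h | h <;> grind
  by_cases hf : f = b
  · right; left; apply e3; intro x; clear e2 e3 e5; rcases wx x with h | h | h | h | h | h <;> grind
  by_cases hf : f = c
  · left; apply e2; intro x; clear e2 e3 e5; rcases wx x with h | h | h | h | h | h <;> grind
  · right; right; apply e5; intro x; clear e2 e3 e5; rcases wx x with h | h | h | h | h | h <;> grind

theorem cyc3_pow {X : Type*} {a b c : X} (h : Dist3 a b c) : cyc3 a b c ^ 3 = 1 := by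
  classical
  ext x
  obtain ⟨h1, h2, h3⟩ := id h
  simp only [pow_succ, pow_zero, one_mul, Equiv.Perm.mul_apply, cyc3_apply h, Equiv.Perm.one_apply]
  grind

theorem pair_order {X : Type*} {p q : Equiv.Perm X} (hp : Is3 p) (hq : Is3 q) :
    (p * q) ^ 2 = 1 ∨ (p * q) ^ 3 = 1 ∨ (p * q) ^ 5 = 1 := by
  classical
  obtain ⟨a, b, c, h, rfl⟩ := hp
  obtain ⟨d, e, f, h', rfl⟩ := hq
  have key : ∀ a b c d e f : X, Dist3 a b c → Dist3 d e f → a = d → 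
    ((cyc3 a b c * cyc3 d e f) ^ 2 = 1 ∨ (cyc3 a b c * cyc3 d e f) ^ 3 = 1 ∨
    (cyc3 a b c * cyc3 d e f) ^ 5 = 1) := by
    rintro a b c d e f h h' rfl
    exact pair_common h h'
  have r1 := cyc3_rot h
  have r2 := cyc3_rot h.rot
  have s1 := cyc3_rot h'
  have s2 := cyc3_rot h'.rot
  by_cases c1 : a = d
  · exact key _ _ _ _ _ _ h h' c1
  by_cases c2 : a = e
  · rw [s1]; exact key _ _ _ _ _ _ h h'.rot c2
  by_cases c3 : a = f
  · rw [s1, s2]; exact key _ _ _ _ _ _ h h'.rot.rot c3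
  rw [r1]
  by_cases c4 : b = d
  · exact key _ _ _ _ _ _ h.rot h' c4
  by_cases c5 : b = e
  · rw [s1]; exact key _ _ _ _ _ _ h.rot h'.rot c5
  by_cases c6 : b = f
  · rw [s1, s2]; exact key _ _ _ _ _ _ h.rot h'.rot.rot c6
  rw [r2]
  by_cases c7 : c = d
  · exact key _ _ _ _ _ _ h.rot.rot h' c7
  by_cases c8 : c = e
  · rw [s1]; exact key _ _ _ _ _ _ h.rot.rot h'.rot c8
  by_cases c9 : c = f
  · rw [s1, s2]; exact key _ _ _ _ _ _ h.rot.rot h'.rot.rot c9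
  right; left
  have hc : Commute (cyc3 c a b) (cyc3 d e f) := by
    ext x
    obtain ⟨h1, h2, h3⟩ := id h
    obtain ⟨h4, h5, h6⟩ := id h'
    simp only [Equiv.Perm.mul_apply, cyc3_apply h.rot.rot, cyc3_apply h']
    grind
  rw [hc.mul_pow, cyc3_pow h.rot.rot, cyc3_pow h', one_mul]

/-- If products of `u` with conjugates of its inverse by elements of `FAlt`
have small order then `u` is a 3-cycle. -/
theorem is3_of_order {X : Type*} [Infinite X] {u : Equiv.Perm X} (h3 : u ^ 3 = 1) (h1 : u ≠ 1)
    (h : ∀ s ∈ FAlt X, (u * (s * u⁻¹ * s⁻¹)) ^ 2 = 1 ∨ (u * (s * u⁻¹ * s⁻¹)) ^ 3 = 1 ∨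
      (u * (s * u⁻¹ * s⁻¹)) ^ 5 = 1) : Is3 u := by
  classical
  have hu : ∀ x, u (u (u x)) = x := fun x => by
    have := Equiv.congr_fun h3 x
    simpa [pow_succ] using this
  have hui : ∀ x, u⁻¹ x = u (u x) := fun x => by
    rw [Equiv.Perm.inv_eq_iff_eq, hu]
  obtain ⟨x1, hx1⟩ : ∃ x, u x ≠ x := by
    by_contra! hh
    exact h1 (Equiv.ext hh)
  obtain ⟨x2, hx2⟩ : ∃ y, y = u x1 := ⟨_, rfl⟩
  obtain ⟨x3, hx3⟩ : ∃ y, y = u x2 := ⟨_, rfl⟩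
  have hx4 : u x3 = x1 := by rw [hx3, hx2, hu]
  have hd : Dist3 x1 x2 x3 := by
    refine ⟨?_, ?_, ?_⟩ <;> grind
  by_contra hn
  obtain ⟨x4, h41, h42, h43, h4⟩ : ∃ x, x ≠ x1 ∧ x ≠ x2 ∧ x ≠ x3 ∧ u x ≠ x := by
    by_contra! hh
    exact hn ⟨x1, x2, x3, hd, eq_cyc3 hd hx2.symm hx3.symm hx4 hh⟩
  obtain ⟨x5, hx5⟩ : ∃ y, y = u x4 := ⟨_, rfl⟩
  obtain ⟨x6, hx6⟩ : ∃ y, y = u x5 := ⟨_, rfl⟩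
  have hx64 : u x6 = x4 := by rw [hx6, hx5, hu]
  obtain ⟨x7, hx7⟩ := Infinite.exists_notMem_finset ({x1, x2, x3, x4, x5, x6} : Finset X)
  simp only [Finset.mem_insert, Finset.mem_singleton, not_or] at hx7
  obtain ⟨a1, a2, a3, a4, a5, a6⟩ := hx7
  have hs : Equiv.swap x1 x7 * Equiv.swap x2 x4 ∈ FAlt X := by
    have e : Equiv.swap x1 x7 * Equiv.swap x2 x4 = cyc3 x1 x7 x2 * cyc3 x7 x2 x4 := by
      simp only [cyc3, mul_assoc, Equiv.swap_mul_self_mul]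
    rw [e]
    exact mul_mem (cyc3_mem ⟨Ne.symm a1, a2, hd.1⟩) (cyc3_mem ⟨a2, Ne.symm h42, a4⟩)
  have h := h _ hs
  obtain ⟨b1, b2, b3⟩ := hd
  set w := u * (Equiv.swap x1 x7 * Equiv.swap x2 x4 * u⁻¹ * (Equiv.swap x1 x7 * Equiv.swap x2 x4)⁻¹) with hw
  have hwx : ∀ x, w x = u (Equiv.swap x1 x7 (Equiv.swap x2 x4 (u (u (Equiv.swap x2 x4 (Equiv.swap x1 x7 x)))))) := by
    intro x
    simp only [hw, Equiv.Perm.mul_apply, mul_inv_rev, Equiv.swap_inv, hui]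
  simp only [Equiv.swap_apply_def] at hwx
  have i2 : w ^ 2 = 1 → ∀ x, w (w x) = x := fun h x => by
    have := Equiv.congr_fun h x
    simpa [pow_succ] using this
  have i3 : w ^ 3 = 1 → ∀ x, w (w (w x)) = x := fun h x => by
    have := Equiv.congr_fun h x
    simpa [pow_succ] using this
  have i5 : w ^ 5 = 1 → ∀ x, w (w (w (w (w x)))) = x := fun h x => by
    have := Equiv.congr_fun h x
    simpa [pow_succ] using this
  have inj : ∀ x y, u x = u y → x = y := fun x y h => u.injective h
  have n5 : x5 ≠ x4 ∧ x5 ≠ x1 ∧ x5 ≠ x2 ∧ x5 ≠ x3 := by grind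
  have n6 : x6 ≠ x4 ∧ x6 ≠ x1 ∧ x6 ≠ x2 ∧ x6 ≠ x3 ∧ x6 ≠ x5 := by grind
  clear_value w
  by_cases h7 : u x7 = x7
  · have v1 : w x1 = x2 := by rw [hwx]; grind
    have v2 : w x2 = x4 := by rw [hwx]; grind
    have v3 : w x4 = x7 := by rw [hwx]; grind
    have v4 : w x7 = x1 := by rw [hwx]; grind
    rcases h with h | h | h
    · have := i2 h x1; grind
    · have := i3 h x1; grind
    · have := i5 h x1; grind
  · obtain ⟨x8, hx8⟩ : ∃ y, y = u x7 := ⟨_, rfl⟩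
    have h8 : x8 ≠ x7 ∧ x8 ≠ x1 ∧ x8 ≠ x2 ∧ x8 ≠ x3 ∧ x8 ≠ x4 ∧ x8 ≠ x5 ∧ x8 ≠ x6 := by grind
    obtain ⟨x9, hx9⟩ : ∃ y, y = u x8 := ⟨_, rfl⟩
    have h9 : u x9 = x7 := by rw [hx9, hx8, hu]
    have h9' : x9 ≠ x8 ∧ x9 ≠ x7 ∧ x9 ≠ x1 ∧ x9 ≠ x2 ∧ x9 ≠ x3 ∧ x9 ≠ x4 ∧ x9 ≠ x5 ∧ x9 ≠ x6 := by grind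
    have v1 : w x1 = x7 := by rw [hwx]; grind
    have v2 : w x7 = x1 := by rw [hwx]; grind
    have v3 : w x2 = x4 := by rw [hwx]; grind
    have v4 : w x4 = x8 := by rw [hwx]; grind
    rcases h with h | h | h
    · have := i2 h x2; grind
    · have := i3 h x1; grind
    · have := i5 h x1; grind

theorem is3_common {X : Type*} {p q : Equiv.Perm X} (hp : Is3 p) (hq : Is3 q) :
    (∃ a b c e f, Dist3 a b c ∧ Dist3 a e f ∧ p = cyc3 a b c ∧ q = cyc3 a e f) ∨
    (∀ x, p x = x ∨ q x = x) := by
  classical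
  obtain ⟨a, b, c, h, rfl⟩ := hp
  obtain ⟨d, e, f, h', rfl⟩ := hq
  have r1 := cyc3_rot h
  have r2 := cyc3_rot h.rot
  have s1 := cyc3_rot h'
  have s2 := cyc3_rot h'.rot
  by_cases hh : ∃ x, cyc3 a b c x ≠ x ∧ cyc3 d e f x ≠ x
  · left
    obtain ⟨x, hx, hx'⟩ := hh
    have k1 : ∃ y z, Dist3 x y z ∧ cyc3 a b c = cyc3 x y z := by
      rw [cyc3_apply h] at hx
      by_cases xa : x = a
      · subst xa; exact ⟨_, _, h, rfl⟩
      by_cases xb : x = b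
      · subst xb; exact ⟨_, _, h.rot, r1⟩
      by_cases xc : x = c
      · subst xc; exact ⟨_, _, h.rot.rot, r1.trans r2⟩
      simp [xa, xb, xc] at hx
    have k2 : ∃ y z, Dist3 x y z ∧ cyc3 d e f = cyc3 x y z := by
      rw [cyc3_apply h'] at hx'
      by_cases xa : x = d
      · subst xa; exact ⟨_, _, h', rfl⟩
      by_cases xb : x = e
      · subst xb; exact ⟨_, _, h'.rot, s1⟩
      by_cases xc : x = f
      · subst xc; exact ⟨_, _, h'.rot.rot, s1.trans s2⟩
      simp [xa, xb, xc] at hx'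
    obtain ⟨y, z, h1, h2⟩ := k1
    obtain ⟨y', z', h1', h2'⟩ := k2
    exact ⟨x, y, z, y', z', h1, h1', h2, h2'⟩
  · right
    intro x
    by_contra hx
    exact hh ⟨x, by tauto, by tauto⟩

theorem is3_of_apply {X : Type*} {r : Equiv.Perm X} (h : Is3 r) {x y : X} (hxy : r x = y)
    (hne : x ≠ y) : ∃ v, Dist3 x y v ∧ r = cyc3 x y v := by
  classical
  obtain ⟨a, b, c, h, rfl⟩ := h
  have r1 := cyc3_rot h
  have r2 := cyc3_rot h.rot
  have h' := h
  obtain ⟨h1, h2, h3⟩ := h'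
  rw [cyc3_apply h] at hxy
  by_cases xa : x = a
  · subst xa; simp at hxy; subst hxy; exact ⟨_, h, rfl⟩
  by_cases xb : x = b
  · subst xb; simp [xa] at hxy; subst hxy; exact ⟨_, h.rot, r1⟩
  by_cases xc : x = c
  · subst xc; simp [xa, xb] at hxy; subst hxy; exact ⟨_, h.rot.rot, r1.trans r2⟩
  simp [xa, xb, xc] at hxy
  exact absurd hxy hne

/-- `p` and `r` share a directed edge (for 3-cycles). -/
def EdgeRel {H : Type*} [Group H] (p r : H) : Prop := (p * r) ^ 2 = 1 ∧ p * r ≠ 1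

theorem edgeRel_cyc3 {X : Type*} {a b c d : X} (h : Dist3 a b c) (h' : Dist3 a b d) (hcd : c ≠ d) :
    EdgeRel (cyc3 a b c) (cyc3 a b d) := by
  classical
  obtain ⟨h1, h2, h3⟩ := id h
  obtain ⟨h4, h5, h6⟩ := id h'
  constructor
  · ext x
    simp only [pow_succ, pow_zero, one_mul, Equiv.Perm.mul_apply, cyc3_apply h, cyc3_apply h',
      Equiv.Perm.one_apply]
    grind
  · intro hh
    have := Equiv.congr_fun hh a
    simp only [Equiv.Perm.mul_apply, cyc3_apply h, cyc3_apply h', Equiv.Perm.one_apply] at this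
    grind

theorem edgeRel_share {X : Type*} {p r : Equiv.Perm X} (hp : Is3 p) (hr : Is3 r)
    (h : EdgeRel p r) :
    ∃ x y z w, Dist3 x y z ∧ Dist3 x y w ∧ z ≠ w ∧ p = cyc3 x y z ∧ r = cyc3 x y w := by
  classical
  obtain ⟨h2, h1⟩ := h
  have h2' : ∀ x, p (r (p (r x))) = x := fun x => by
    have := Equiv.congr_fun h2 x
    simpa [pow_succ] using this
  have h1' : ¬ ∀ x, p (r x) = x := fun hh => h1 (Equiv.ext hh)
  rcases is3_common hp hr with ⟨a, b, c, e, f, h, h', rfl, rfl⟩ | hd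
  · obtain ⟨k1, k2, k3⟩ := id h
    obtain ⟨k4, k5, k6⟩ := id h'
    have pa : ∀ x, cyc3 a b c x = _ := cyc3_apply h
    have ra : ∀ x, cyc3 a e f x = _ := cyc3_apply h'
    by_cases he : e = b
    · subst he
      by_cases hf : f = c
      · subst hf
        have := h2' a
        simp only [pa] at this
        grind
      · exact ⟨a, e, c, f, h, h', Ne.symm hf, rfl, rfl⟩
    by_cases hf : f = c
    · subst hf
      exact ⟨f, a, b, e, h.rot.rot, h'.rot.rot, Ne.symm he,
        (cyc3_rot h).trans (cyc3_rot h.rot), (cyc3_rot h').trans (cyc3_rot h'.rot)⟩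
    exfalso
    have va := h2' a
    have vb := h2' b
    have vc := h2' c
    have ve := h2' e
    simp only [pa, ra] at h1' va vb vc ve
    by_cases he' : e = c
    · by_cases hf' : f = b
      · apply h1'; grind
      · grind
    · grind
  · exfalso
    obtain ⟨a, b, c, h, rfl⟩ := hp
    obtain ⟨k1, k2, k3⟩ := id h
    have pa : ∀ x, cyc3 a b c x = _ := cyc3_apply h
    have va := h2' a
    have da := hd a
    have db := hd b
    have e1 : cyc3 a b c a = b := by rw [pa]; grind
    have e2 : cyc3 a b c b = c := by rw [pa]; grind
    grind

theorem edgeRel_triangle {X : Type*} {x y z w : X} (h : Dist3 x y z) (h' : Dist3 x y w)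
    (hzw : z ≠ w) {r : Equiv.Perm X} (hr : Is3 r) (e1 : EdgeRel (cyc3 x y z) r)
    (e2 : EdgeRel (cyc3 x y w) r) : ∃ v, Dist3 x y v ∧ r = cyc3 x y v := by
  classical
  apply is3_of_apply hr _ h.1
  have edge : ∀ {p : Equiv.Perm X}, Is3 p → EdgeRel p r → ∃ s, p s = r s ∧ p s ≠ s := by
    intro p hp e
    obtain ⟨s, t, u, v, h1, h2, h3, rfl, rfl⟩ := edgeRel_share hp hr e
    refine ⟨s, ?_, ?_⟩
    · rw [cyc3_apply h1, cyc3_apply h2]; simp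
    · rw [cyc3_apply h1]; simpa using h1.1.symm
  obtain ⟨s, hs, hs'⟩ := edge ⟨_, _, _, h, rfl⟩ e1
  obtain ⟨t, ht, ht'⟩ := edge ⟨_, _, _, h', rfl⟩ e2
  obtain ⟨k1, k2, k3⟩ := id h
  obtain ⟨k4, k5, k6⟩ := id h'
  rw [cyc3_apply h] at hs hs'
  rw [cyc3_apply h'] at ht ht'
  have inj : ∀ x y, r x = r y → x = y := fun x y h => r.injective h
  by_contra hne
  have A : (r y = z ∨ r z = x) := by grind
  have B : (r y = w ∨ r w = x) := by grind
  have t3 : ∀ x, r (r (r x)) = x := by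
    obtain ⟨a, b, c, h, rfl⟩ := hr
    intro x
    have := Equiv.congr_fun (cyc3_pow h) x
    simpa [pow_succ] using this
  have cr : ∀ u v, r u ≠ u → r v ≠ v → v = u ∨ v = r u ∨ v = r (r u) := by
    intro u v hu hv
    obtain ⟨m, hm⟩ : ∃ m, r u = m := ⟨_, rfl⟩
    obtain ⟨s, hs, hrs⟩ := is3_of_apply hr hm (by rw [← hm]; exact Ne.symm hu)
    have e := cyc3_apply hs
    rw [← hrs] at e
    have e1 := e v
    have e2 := e m
    clear e
    obtain ⟨k1, k2, k3⟩ := hs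
    grind
  have := cr y w
  have := cr z y
  have := t3 y
  have := t3 z
  grind

theorem cyc3_gen {X : Type*} (K : Subgroup (Equiv.Perm X)) {a b : X} (hab : a ≠ b)
    (hK : ∀ d, Dist3 a b d → cyc3 a b d ∈ K) {x y z : X} (h : Dist3 x y z) : cyc3 x y z ∈ K := by
  classical
  have h1 : ∀ x, x ≠ b → Equiv.swap a b * Equiv.swap b x ∈ K := by
    intro x hx
    by_cases hxa : x = a
    · subst hxa; rw [Equiv.swap_comm x b, Equiv.swap_mul_self]; exact K.one_mem
    · have := hK x ⟨hab, Ne.symm hx, Ne.symm hxa⟩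
      simp only [cyc3] at this
      convert this
  have h2 : ∀ x y, x ≠ b → y ≠ b → Equiv.swap b x * Equiv.swap b y ∈ K := by
    intro x y hx hy
    have := K.mul_mem (K.inv_mem (h1 x hx)) (h1 y hy)
    simpa [mul_inv_rev, mul_assoc, Equiv.swap_mul_self_mul] using this
  have h3 : ∀ x z, Dist3 x b z → cyc3 x b z ∈ K := by
    intro x z h
    have := h2 x z h.1 h.2.1.symm
    rw [Equiv.swap_comm b x] at this
    simp only [cyc3]
    convert this
  by_cases c1 : y = b
  · subst c1; exact h3 x z h
  by_cases c2 : z = b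
  · subst c2; rw [cyc3_rot h]; exact h3 _ _ h.rot
  by_cases c3 : x = b
  · subst c3; rw [cyc3_rot h, cyc3_rot h.rot]; exact h3 _ _ h.rot.rot
  have e : ∀ x y, x ≠ y → x ≠ b → y ≠ b → Equiv.swap x y = Equiv.swap b x * Equiv.swap b y * Equiv.swap b x := by
    intro x y h1 h2 h3
    ext t
    simp only [Equiv.Perm.mul_apply, Equiv.swap_apply_def]
    grind
  have : cyc3 x y z = (Equiv.swap b x * Equiv.swap b y) * (Equiv.swap b x * Equiv.swap b y) *
     (Equiv.swap b z * Equiv.swap b y) := by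
    have e1 := e x y h.1 c3 c1
    have e2 := e y z h.2.1 c1 c2
    have : cyc3 x y z = Equiv.swap x y * Equiv.swap y z := by
      simp only [cyc3]
    rw [this, e1, e2]
    simp only [mul_assoc]
  rw [this]
  exact K.mul_mem (K.mul_mem (h2 _ _ c3 c1) (h2 _ _ c3 c1)) (h2 _ _ c2 c1)

theorem aut_is3 {X : Type*} [Infinite X] {G : Subgroup (Equiv.Perm X)} (hG : FAlt X ≤ G)
    (φ : G ≃* G) (c : G) (hc : Is3 (c : Equiv.Perm X)) : Is3 (φ c : Equiv.Perm X) := by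
  classical
  apply is3_of_order
  · obtain ⟨x, y, z, h, e⟩ := hc
    have : c ^ 3 = 1 := by
      apply Subtype.ext
      simp [e, cyc3_pow h]
    have := congrArg φ this
    rw [map_pow, map_one] at this
    simpa using congrArg Subtype.val this
  · intro h
    have h1 : φ c = 1 := Subtype.ext h
    have h2 : c = 1 := by simpa using h1
    obtain ⟨x, y, z, h, e⟩ := hc
    have := cyc3_apply h x
    rw [← e, h2] at this
    simp at this
    exact h.1 this
  · intro s hs
    obtain ⟨s', hs'⟩ := φ.surjective ⟨s, hG hs⟩
    have key : ∀ n : ℕ, ((c : Equiv.Perm X) * (s' * (c : Equiv.Perm X)⁻¹ * (s' : Equiv.Perm X)⁻¹)) ^ n = 1 →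
        ((φ c : Equiv.Perm X) * (s * (φ c : Equiv.Perm X)⁻¹ * s⁻¹)) ^ n = 1 := by
      intro n hn
      have h1 : (c * (s' * c⁻¹ * s'⁻¹)) ^ n = 1 := by
        apply Subtype.ext
        simpa using hn
      have h2 := congrArg φ h1
      simp only [map_pow, map_mul, map_inv, map_one, hs'] at h2
      simpa using congrArg Subtype.val h2
    rcases pair_order hc (hc.inv.conj s') with h | h | h
    · exact Or.inl (key _ h)
    · exact Or.inr (Or.inl (key _ h))
    · exact Or.inr (Or.inr (key _ h))

theorem edgeRel_map {H : Type*} [Group H] (φ : H ≃* H) {p r : H} (h : EdgeRel p r) :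
    EdgeRel (φ p) (φ r) := by
  refine ⟨?_, fun hh => h.2 ?_⟩
  · rw [← map_mul, ← map_pow, h.1, map_one]
  · rw [← map_mul] at hh; exact (map_eq_one_iff φ φ.injective).1 hh

theorem edgeRel_coe {H : Type*} [Group H] {G : Subgroup H} {p r : G} :
    EdgeRel p r ↔ EdgeRel (p : H) (r : H) := by
  unfold EdgeRel
  norm_cast

theorem aut_inner {X : Type*} [Infinite X] {G : Subgroup (Equiv.Perm X)} (hG : FAlt X ≤ G)
    (φ : G ≃* G) : ∃ τ : Equiv.Perm X, ∀ g : G, (φ g : Equiv.Perm X) = τ * g * τ⁻¹ := by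
  classical
  have mem : ∀ {x y z : X}, Dist3 x y z → cyc3 x y z ∈ G := fun h => hG (cyc3_mem h)
  have hmap : ∀ {x y z : X} (h : Dist3 x y z), Is3 (φ ⟨cyc3 x y z, mem h⟩ : Equiv.Perm X) :=
    fun h => aut_is3 hG φ _ ⟨_, _, _, h, rfl⟩
  obtain ⟨a⟩ : Nonempty X := inferInstance
  obtain ⟨b, hb⟩ := Infinite.exists_notMem_finset ({a} : Finset X)
  obtain ⟨d1, hd1⟩ := Infinite.exists_notMem_finset ({a, b} : Finset X)
  obtain ⟨d2, hd2⟩ := Infinite.exists_notMem_finset ({a, b, d1} : Finset X)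
  simp only [Finset.mem_insert, Finset.mem_singleton, not_or] at hb hd1 hd2
  have hab : a ≠ b := Ne.symm hb
  have D1 : Dist3 a b d1 := ⟨hab, Ne.symm hd1.2, Ne.symm hd1.1⟩
  have D2 : Dist3 a b d2 := ⟨hab, Ne.symm hd2.2.1, Ne.symm hd2.1⟩
  have hE : ∀ {d d' : X} (h : Dist3 a b d) (h' : Dist3 a b d'), d ≠ d' →
      EdgeRel (φ ⟨cyc3 a b d, mem h⟩ : Equiv.Perm X) (φ ⟨cyc3 a b d', mem h'⟩ : Equiv.Perm X) := by
    intro d d' h h' hne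
    rw [← edgeRel_coe]
    apply edgeRel_map
    rw [edgeRel_coe]
    exact edgeRel_cyc3 h h' hne
  obtain ⟨a', b', z, w, Dz, Dw, hzw, ez, ew⟩ :=
    edgeRel_share (hmap D1) (hmap D2) (hE D1 D2 (Ne.symm hd2.2.2))
  have hex : ∀ d, ∃ v, (d = a → v = a') ∧ (d = b → v = b') ∧
      ∀ h : Dist3 a b d, Dist3 a' b' v ∧ (φ ⟨cyc3 a b d, mem h⟩ : Equiv.Perm X) = cyc3 a' b' v := by
    intro d
    by_cases c1 : d = a
    · exact ⟨a', fun _ => rfl, fun h => absurd (c1.symm.trans h) hab, fun h => absurd c1.symm h.2.2⟩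
    by_cases c2 : d = b
    · exact ⟨b', fun h => absurd h c1, fun _ => rfl, fun h => absurd c2.symm h.2.1⟩
    have Dd : Dist3 a b d := ⟨hab, Ne.symm c2, Ne.symm c1⟩
    by_cases c3 : d = d1
    · subst c3; exact ⟨z, fun h => absurd h c1, fun h => absurd h c2, fun _ => ⟨Dz, ez⟩⟩
    by_cases c4 : d = d2
    · subst c4; exact ⟨w, fun h => absurd h c1, fun h => absurd h c2, fun _ => ⟨Dw, ew⟩⟩
    obtain ⟨v, hv, hv'⟩ := edgeRel_triangle Dz Dw hzw (hmap Dd)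
      (by rw [← ez]; exact hE D1 Dd (Ne.symm c3)) (by rw [← ew]; exact hE D2 Dd (Ne.symm c4))
    exact ⟨v, fun h => absurd h c1, fun h => absurd h c2, fun _ => ⟨hv, hv'⟩⟩
  choose f fa fb fd using hex
  have fa := fa a rfl
  have fb := fb b rfl
  have hD : ∀ d, d ≠ a → d ≠ b → Dist3 a b d := fun d h1 h2 => ⟨hab, Ne.symm h2, Ne.symm h1⟩
  have c3inj : ∀ {a b d d' : X}, Dist3 a b d → Dist3 a b d' → cyc3 a b d = cyc3 a b d' → d = d' := by
    intro a b d d' h h' e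
    have := Equiv.congr_fun e b
    rw [cyc3_apply h, cyc3_apply h'] at this
    simpa [h.1.symm] using this
  have finj : Function.Injective f := by
    have n1 : a' ≠ b' := Dz.1
    have n2 : ∀ d, d ≠ a → d ≠ b → f d ≠ a' ∧ f d ≠ b' := fun d h1 h2 =>
      ⟨(fd d (hD d h1 h2)).1.2.2.symm, (fd d (hD d h1 h2)).1.2.1.symm⟩
    have n3 : ∀ d d', d ≠ a → d ≠ b → d' ≠ a → d' ≠ b → f d = f d' → d = d' := by
      intro d d' h1 h2 h3 h4 e
      have e1 := (fd d (hD d h1 h2)).2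
      have e2 := (fd d' (hD d' h3 h4)).2
      rw [e, ← e2] at e1
      have := φ.injective (Subtype.ext e1)
      exact c3inj (hD d h1 h2) (hD d' h3 h4) (congrArg Subtype.val this)
    intro d d' e
    have m1 := n2 d
    have m2 := n2 d'
    have m3 := n3 d d'
    clear n2 n3 c3inj hD fd hE ez ew hmap mem hG D1 D2 Dz Dw
    by_cases da : d = a <;> by_cases db : d = b <;> by_cases da' : d' = a <;>
      by_cases db' : d' = b <;> grind
  have fsurj : Function.Surjective f := by
    intro y
    by_cases c1 : y = a'
    · exact ⟨a, fa.trans c1.symm⟩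
    by_cases c2 : y = b'
    · exact ⟨b, fb.trans c2.symm⟩
    by_cases c3 : y = z
    · refine ⟨d1, ?_⟩
      have := (fd d1 D1)
      rw [c3]
      exact c3inj this.1 Dz (this.2.symm.trans ez)
    by_cases c4 : y = w
    · refine ⟨d2, ?_⟩
      have := (fd d2 D2)
      rw [c4]
      exact c3inj this.1 Dw (this.2.symm.trans ew)
    have Dy : Dist3 a' b' y := ⟨Dz.1, Ne.symm c2, Ne.symm c1⟩
    obtain ⟨q, hq⟩ := φ.surjective ⟨cyc3 a' b' y, mem Dy⟩
    have hq3 : Is3 (q : Equiv.Perm X) := by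
      have := aut_is3 hG φ.symm (φ q) (by rw [hq]; exact ⟨_, _, _, Dy, rfl⟩)
      simpa using this
    have back : ∀ p : G, EdgeRel (φ p : Equiv.Perm X) (cyc3 a' b' y) → EdgeRel (p : Equiv.Perm X) q := by
      intro p hp
      rw [← edgeRel_coe]
      have : EdgeRel (φ p) (φ q) := by rw [edgeRel_coe, hq]; exact hp
      simpa using edgeRel_map φ.symm this
    obtain ⟨v, hv, hv'⟩ := edgeRel_triangle D1 D2 (Ne.symm hd2.2.2) hq3
      (back ⟨_, mem D1⟩ (by rw [ez]; exact edgeRel_cyc3 Dz Dy (Ne.symm c3)))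
      (back ⟨_, mem D2⟩ (by rw [ew]; exact edgeRel_cyc3 Dw Dy (Ne.symm c4)))
    refine ⟨v, ?_⟩
    have hq' : q = ⟨cyc3 a b v, mem hv⟩ := Subtype.ext hv'
    have e := fd v hv
    rw [← hq', hq] at e
    exact c3inj e.1 Dy e.2.symm
  let τ : Equiv.Perm X := Equiv.ofBijective f ⟨finj, fsurj⟩
  have hτ : ∀ x, τ x = f x := fun x => rfl
  clear_value τ
  have all : ∀ {x y z : X} (h : Dist3 x y z),
      (φ ⟨cyc3 x y z, mem h⟩ : Equiv.Perm X) = cyc3 (τ x) (τ y) (τ z) := by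
    intro x y z h
    let K : Subgroup (Equiv.Perm X) := (MonoidHom.eqLocus (G.subtype.comp φ.toMonoidHom)
      ((MulAut.conj τ).toMonoidHom.comp G.subtype)).map G.subtype
    have hK : cyc3 x y z ∈ K := by
      apply cyc3_gen K hab _ h
      intro d hd
      refine ⟨⟨_, mem hd⟩, ?_, rfl⟩
      change (φ ⟨_, mem hd⟩ : Equiv.Perm X) = τ * cyc3 a b d * τ⁻¹
      rw [cyc3_conj hd, (fd d hd).2, hτ, hτ, hτ, fa, fb]
    obtain ⟨g, hg, hg'⟩ := hK
    have hg1 : (φ g : Equiv.Perm X) = τ * g * τ⁻¹ := hg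
    have hg2 : g = ⟨cyc3 x y z, mem h⟩ := Subtype.ext hg'
    rw [← hg2, hg1, hg2]
    exact cyc3_conj h τ
  refine ⟨τ, fun g => ?_⟩
  have hsupp : ∀ {x y z : X}, Dist3 x y z →
      (φ g : Equiv.Perm X) (τ x) = τ ((g : Equiv.Perm X) x) ∨
      (φ g : Equiv.Perm X) (τ x) = τ ((g : Equiv.Perm X) y) ∨
      (φ g : Equiv.Perm X) (τ x) = τ ((g : Equiv.Perm X) z) := by
    intro x y z h
    have e1 : g * ⟨cyc3 x y z, mem h⟩ * g⁻¹ = ⟨_, mem (h.map (g : Equiv.Perm X))⟩ :=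
      Subtype.ext (cyc3_conj h (g : Equiv.Perm X))
    have e2 := congrArg (fun t => (φ t : Equiv.Perm X)) e1
    simp only [map_mul, map_inv, Subgroup.coe_mul, Subgroup.coe_inv] at e2
    rw [all h, all (h.map _), cyc3_conj (h.map τ)] at e2
    have D := (h.map τ).map (φ g : Equiv.Perm X)
    have D' := (h.map (g : Equiv.Perm X)).map τ
    have e3 := Equiv.congr_fun e2 ((φ g : Equiv.Perm X) (τ x))
    rw [cyc3_apply D, cyc3_apply D'] at e3
    obtain ⟨k1, k2, k3⟩ := D
    grind
  have key : ∀ x, (φ g : Equiv.Perm X) (τ x) = τ ((g : Equiv.Perm X) x) := by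
    intro x
    obtain ⟨y, hy⟩ := Infinite.exists_notMem_finset ({x} : Finset X)
    obtain ⟨z, hz⟩ := Infinite.exists_notMem_finset ({x, y} : Finset X)
    obtain ⟨u, hu⟩ := Infinite.exists_notMem_finset ({x, y, z} : Finset X)
    obtain ⟨v, hv⟩ := Infinite.exists_notMem_finset ({x, y, z, u} : Finset X)
    simp only [Finset.mem_insert, Finset.mem_singleton, not_or] at hy hz hu hv
    have s1 := hsupp (x := x) (y := y) (z := z) (by unfold Dist3; grind)
    have s2 := hsupp (x := x) (y := u) (z := v) (by unfold Dist3; grind)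
    have inj : ∀ s t, τ ((g : Equiv.Perm X) s) = τ ((g : Equiv.Perm X) t) → s = t := fun s t h =>
      (g : Equiv.Perm X).injective (τ.injective h)
    grind
  ext x
  have := key (τ⁻¹ x)
  simpa using this

theorem fix_up {X : Type*} (t : Equiv.Perm X) (ht : {x | t x ≠ x}.Infinite) :
    ∃ g ∈ FAlt X, {x | (t * g) x ≠ x}.Infinite ∧ {x | t x = x} ⊂ {x | (t * g) x = x} := by
  classical
  obtain ⟨b, hb⟩ := ht.nonempty
  obtain ⟨a, ha⟩ : ∃ a, t b = a := ⟨_, rfl⟩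
  obtain ⟨c, hc, hc'⟩ := ht.exists_notMem_finset {a, b}
  simp only [Finset.mem_insert, Finset.mem_singleton, not_or] at hc'
  have hb : t b ≠ b := hb
  have hc : t c ≠ c := hc
  have hta : t a ≠ a := fun h => hb (by rw [← ha] at h; exact t.injective h)
  have D : Dist3 a b c := by
    refine ⟨?_, Ne.symm hc'.2, Ne.symm hc'.1⟩
    rw [← ha]; exact hb
  have e : ∀ x, (t * cyc3 a b c) x = t (if x = a then b else if x = b then c else if x = c then a else x) := by
    intro x
    rw [Equiv.Perm.mul_apply, cyc3_apply D]
  refine ⟨cyc3 a b c, cyc3_mem D, ?_, ?_, ?_⟩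
  · refine (ht.diff (Set.toFinite {a, b, c})).mono ?_
    rintro x ⟨hx, hx'⟩
    simp only [Set.mem_insert_iff, Set.mem_singleton_iff, not_or] at hx'
    change (t * cyc3 a b c) x ≠ x
    rw [e, if_neg hx'.1, if_neg hx'.2.1, if_neg hx'.2.2]
    exact hx
  · intro x hx
    have hx : t x = x := hx
    change (t * cyc3 a b c) x = x
    rw [e]
    grind
  · intro h
    have : t a = a := h (show (t * cyc3 a b c) a = a by rw [e, if_pos rfl, ha])
    exact hta this

theorem fix_down {X : Type*} (t : Equiv.Perm X) (ht : {x | t x = x}.Infinite) :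
    ∃ g ∈ FAlt X, {x | (t * g) x = x}.Infinite ∧ {x | (t * g) x = x} ⊂ {x | t x = x} := by
  classical
  obtain ⟨a, ha⟩ := ht.nonempty
  obtain ⟨b, hb, hb'⟩ := ht.exists_notMem_finset {a}
  obtain ⟨c, hc, hc'⟩ := ht.exists_notMem_finset {a, b}
  simp only [Finset.mem_insert, Finset.mem_singleton, not_or] at hb' hc'
  have ha : t a = a := ha
  have hb : t b = b := hb
  have hc : t c = c := hc
  have D : Dist3 a b c := ⟨Ne.symm hb', Ne.symm hc'.2, Ne.symm hc'.1⟩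
  have e : ∀ x, (t * cyc3 a b c) x = t (if x = a then b else if x = b then c else if x = c then a else x) := by
    intro x
    rw [Equiv.Perm.mul_apply, cyc3_apply D]
  refine ⟨cyc3 a b c, cyc3_mem D, ?_, ?_, ?_⟩
  · refine (ht.diff (Set.toFinite {a, b, c})).mono ?_
    rintro x ⟨hx, hx'⟩
    simp only [Set.mem_insert_iff, Set.mem_singleton_iff, not_or] at hx'
    change (t * cyc3 a b c) x = x
    rw [e, if_neg hx'.1, if_neg hx'.2.1, if_neg hx'.2.2]
    exact hx
  · intro x hx
    have hx : (t * cyc3 a b c) x = x := hx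
    change t x = x
    rw [e] at hx
    grind
  · intro h
    have : (t * cyc3 a b c) a = a := h (show t a = a from ha)
    rw [e, if_pos rfl, hb] at this
    exact hb' this

theorem fix_seq {X : Type*} (Q : Equiv.Perm X → Prop) (R : Set X → Set X → Prop) [IsTrans _ R]
    (step : ∀ t, Q t → ∃ g ∈ FAlt X, Q (t * g) ∧ R {x | t x = x} {x | (t * g) x = x})
    (t : Equiv.Perm X) (ht : Q t) :
    ∃ f : ℕ → Equiv.Perm X, (∀ n, f n ∈ FAlt X) ∧
      ∀ m n, m < n → R {x | (t * f m) x = x} {x | (t * f n) x = x} := by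
  have nx : ∀ s : {g // g ∈ FAlt X ∧ Q (t * g)}, ∃ s' : {g // g ∈ FAlt X ∧ Q (t * g)},
      R {x | (t * s.1) x = x} {x | (t * s'.1) x = x} := by
    rintro ⟨g, hg, hq⟩
    obtain ⟨k, hk, hk1, hk2⟩ := step _ hq
    rw [mul_assoc] at hk1 hk2
    exact ⟨⟨g * k, mul_mem hg hk, hk1⟩, hk2⟩
  choose nxt hn using nx
  let s : ℕ → {g // g ∈ FAlt X ∧ Q (t * g)} :=
    fun n => nxt^[n] ⟨1, one_mem _, by simpa using ht⟩
  refine ⟨fun n => (s n).1, fun n => (s n).2.1, fun m n hmn => ?_⟩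
  refine Nat.rel_of_forall_rel_succ_of_lt (fun A B : Set X => R A B)
    (f := fun n => {x | (t * (s n).1) x = x}) ?_ hmn
  intro n
  have : s (n + 1) = nxt (s n) := Function.iterate_succ_apply' _ _ _
  simp only [this]
  exact hn _

theorem torsion_no_shrink {X : Type*} {p : Equiv.Perm X} (hp : IsOfFinOrder p) {S T : Set X}
    (hST : S ⊂ T) (h : ∀ z ∈ T, p z ∈ S) : False := by
  obtain ⟨n, hn, hpn⟩ := isOfFinOrder_iff_pow_eq_one.1 hp
  apply hST.2
  have : ∀ k : ℕ, ∀ z ∈ T, (p ^ (k + 1)) z ∈ S := by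
    intro k
    induction k with
    | zero => intro z hz; simpa using h z hz
    | succ k ih =>
      intro z hz
      rw [pow_succ, Equiv.Perm.mul_apply]
      exact ih _ (hST.1 (h z hz))
  intro z hz
  have h2 := this (n - 1) z hz
  rw [Nat.sub_add_cancel hn, hpn] at h2
  exact h2

theorem twistedConj_equivalence {G : Type*} [Group G] (φ : G ≃* G) :
    Equivalence (TwistedConj φ) where
  refl a := ⟨1, by simp⟩
  symm := by
    rintro a b ⟨x, rfl⟩
    exact ⟨x⁻¹, by simp [mul_assoc]⟩
  trans := by
    rintro a b c ⟨x, rfl⟩ ⟨y, rfl⟩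
    exact ⟨x * y, by simp [mul_assoc]⟩

/-- An infinite torsion group fully containing `FAlt X` has the `R∞` property. -/
theorem rinfinity_of_torsion_fullyContains {X : Type*} [Infinite X]
    (G : Subgroup (Equiv.Perm X)) (hG : FAlt X ≤ G)
    (htor : Monoid.IsTorsion ↥G) :
    RInfinity ↥G := by
  intro φ
  obtain ⟨τ, hτ⟩ := aut_inner hG φ
  have hseq : ∃ f : ℕ → Equiv.Perm X, (∀ n, f n ∈ FAlt X) ∧
      ∀ m n, m ≠ n → {x | (τ⁻¹ * f m) x = x} ⊂ {x | (τ⁻¹ * f n) x = x} ∨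
        {x | (τ⁻¹ * f n) x = x} ⊂ {x | (τ⁻¹ * f m) x = x} := by
    by_cases hfix : {x | τ⁻¹ x = x}.Infinite
    · haveI : IsTrans (Set X) (fun A B => B ⊂ A) := ⟨fun A B C h1 h2 => h2.trans h1⟩
      obtain ⟨f, hf, h⟩ := fix_seq (fun t => {x | t x = x}.Infinite) (fun A B => B ⊂ A)
        fix_down τ⁻¹ hfix
      refine ⟨f, hf, fun m n hmn => ?_⟩
      rcases lt_or_gt_of_ne hmn with hl | hl
      · exact Or.inr (h _ _ hl)
      · exact Or.inl (h _ _ hl)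
    · have hfix' : {x | τ⁻¹ x ≠ x}.Infinite := (Set.not_infinite.1 hfix).infinite_compl
      haveI : IsTrans (Set X) (fun A B => A ⊂ B) := ⟨fun A B C h1 h2 => h1.trans h2⟩
      obtain ⟨f, hf, h⟩ := fix_seq (fun t => {x | t x ≠ x}.Infinite) (fun A B => A ⊂ B)
        fix_up τ⁻¹ hfix'
      refine ⟨f, hf, fun m n hmn => ?_⟩
      rcases lt_or_gt_of_ne hmn with hl | hl
      · exact Or.inl (h _ _ hl)
      · exact Or.inr (h _ _ hl)
  obtain ⟨f, hf, hcmp⟩ := hseq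
  refine Infinite.of_injective
    (fun n : ℕ => Quot.mk (TwistedConj φ) (⟨f n, hG (hf n)⟩ : G)) ?_
  intro m n hmn
  by_contra hne
  obtain ⟨x, hx⟩ := ((twistedConj_equivalence φ).eqvGen_iff).1 (Quot.eqvGen_exact hmn)
  have hx1 : (φ x : Equiv.Perm X)⁻¹ * f m * x = f n := by
    simpa using congrArg Subtype.val hx
  rw [hτ] at hx1
  have hx2 : (x : Equiv.Perm X)⁻¹ * (τ⁻¹ * f m) * x = τ⁻¹ * f n := by
    rw [← hx1]; group
  have hiff : ∀ y, (τ⁻¹ * f n) y = y ↔ (τ⁻¹ * f m) ((x : Equiv.Perm X) y) = (x : Equiv.Perm X) y := by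
    intro y
    rw [← hx2, Equiv.Perm.mul_apply, Equiv.Perm.mul_apply, Equiv.Perm.inv_eq_iff_eq]
  have hfo : IsOfFinOrder (x : Equiv.Perm X) := by
    obtain ⟨k, hk, hxk⟩ := isOfFinOrder_iff_pow_eq_one.1 (htor x)
    exact isOfFinOrder_iff_pow_eq_one.2 ⟨k, hk, by simpa using congrArg Subtype.val hxk⟩
  rcases hcmp m n hne with hlt | hlt
  · exact torsion_no_shrink hfo hlt fun z hz => (hiff z).1 hz
  · refine torsion_no_shrink hfo.inv hlt fun z hz => (hiff _).2 ?_
    simpa using hz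
end

section
/- Let X be an infinite set and let G be a subgroup of Sym(X) fully containing FAlt(X). If no element g ∈ G has an infinite orbit (i.e. every orbit of every element of G is finite), then G has the R_∞ property. -/
namespace RInf
open Equiv

/-- The 3-cycle `a → b → c → a`. -/
def c3 {X : Type*} [DecidableEq X] (a b c : X) : Perm X := swap a b * swap b c

theorem viaEmb_swap {α X : Type*} [DecidableEq α] [DecidableEq X] (ι : α ↪ X) (i j : α) :
    Perm.viaEmbeddingHom ι (swap i j) = swap (ι i) (ι j) := by
  ext x
  rw [Perm.viaEmbeddingHom_apply]
  by_cases hx : x ∈ Set.range ι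
  · obtain ⟨k, rfl⟩ := hx
    rw [Perm.viaEmbedding_apply]
    simp only [swap_apply_def, ι.injective.eq_iff]
    split_ifs <;> rfl
  · rw [Perm.viaEmbedding_apply_of_notMem _ _ _ hx]
    rw [swap_apply_of_ne_of_ne]
    · rintro rfl; exact hx ⟨_, rfl⟩
    · rintro rfl; exact hx ⟨_, rfl⟩

theorem viaEmb_c3 {α X : Type*} [DecidableEq α] [DecidableEq X] (ι : α ↪ X) (i j k : α) :
    Perm.viaEmbeddingHom ι (c3 i j k) = c3 (ι i) (ι j) (ι k) := by
  simp [c3, viaEmb_swap]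

theorem exists_emb {X : Type*} [DecidableEq X] [Infinite X] {a b c : X} (hab : a ≠ b)
    (hac : a ≠ c) (hbc : b ≠ c) (d e f : X) :
    ∃ ι : Fin 6 ↪ X, ι 0 = a ∧ ι 1 = b ∧ ι 2 = c ∧ (∃ i, ι i = d) ∧ (∃ i, ι i = e) ∧
      (∃ i, ι i = f) := by
  obtain ⟨T, hT, hc⟩ := Infinite.exists_superset_card_eq ({a, b, c, d, e, f} : Finset X) 6
    Finset.card_le_six
  have h3 : (T \ {a, b, c}).card = 3 := by
    rw [Finset.card_sdiff_of_subset, hc, Finset.card_eq_three.2 ⟨a, b, c, hab, hac, hbc, rfl⟩]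
    intro x hx
    apply hT
    simp at hx ⊢
    tauto
  obtain ⟨x, y, z, hxy, hxz, hyz, h⟩ := Finset.card_eq_three.1 h3
  have hx : x ∈ T \ {a, b, c} := by rw [h]; simp
  have hy : y ∈ T \ {a, b, c} := by rw [h]; simp
  have hz : z ∈ T \ {a, b, c} := by rw [h]; simp
  simp at hx hy hz
  have key : ∀ t ∈ T, ∃ i, (![a, b, c, x, y, z] : Fin 6 → X) i = t := by
    intro t ht
    have : t ∈ ({a, b, c} : Finset X) ∨ t ∈ ({x, y, z} : Finset X) := by
      rw [← h, Finset.mem_sdiff]; tauto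
    simp at this
    rcases this with (rfl | rfl | rfl) | (rfl | rfl | rfl)
    · exact ⟨0, rfl⟩
    · exact ⟨1, rfl⟩
    · exact ⟨2, rfl⟩
    · exact ⟨3, rfl⟩
    · exact ⟨4, rfl⟩
    · exact ⟨5, rfl⟩
  refine ⟨⟨![a, b, c, x, y, z], ?_⟩, rfl, rfl, rfl, key d (hT (by simp)), key e (hT (by simp)),
    key f (hT (by simp))⟩
  intro i j
  fin_cases i <;> fin_cases j <;> simp <;> grind

set_option synthInstance.maxSize 2000 in
set_option synthInstance.maxHeartbeats 400000 in
theorem fin_pow : ∀ i j k : Fin 6, i ≠ j → i ≠ k → j ≠ k →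
    ((c3 0 1 2 * c3 i j k)^2 = 1 ∨ (c3 0 1 2 * c3 i j k)^3 = 1 ∨
      (c3 0 1 2 * c3 i j k)^5 = 1) := by
  decide +kernel

theorem fin_arc : ∀ i j k : Fin 6, i ≠ j → i ≠ k → j ≠ k →
    (c3 0 1 2 * c3 i j k)^2 = 1 → (c3 0 1 2 * c3 i j k) ≠ 1 →
      ∃ u, c3 0 1 2 u = c3 i j k u ∧ c3 0 1 2 u ≠ u := by
  decide +kernel

variable {X : Type*} [DecidableEq X] [Infinite X]

/-- Being a 3-cycle. -/
def Is3 {X : Type*} [DecidableEq X] (p : Perm X) : Prop :=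
  ∃ a b c : X, a ≠ b ∧ a ≠ c ∧ b ≠ c ∧ p = c3 a b c

theorem Is3.pow30 {p q : Perm X} (hp : Is3 p) (hq : Is3 q) : (p * q) ^ 30 = 1 := by
  obtain ⟨a, b, c, hab, hac, hbc, rfl⟩ := hp
  obtain ⟨d, e, f, hde, hdf, hef, rfl⟩ := hq
  obtain ⟨ι, rfl, rfl, rfl, ⟨i, rfl⟩, ⟨j, rfl⟩, ⟨k, rfl⟩⟩ := exists_emb hab hac hbc d e f
  rw [← viaEmb_c3, ← viaEmb_c3, ← map_mul, ← map_pow]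
  rcases fin_pow i j k (by simpa using hde) (by simpa using hdf) (by simpa using hef) with h | h | h
  · rw [show 30 = 2 * 15 from rfl, pow_mul, h, one_pow, map_one]
  · rw [show 30 = 3 * 10 from rfl, pow_mul, h, one_pow, map_one]
  · rw [show 30 = 5 * 6 from rfl, pow_mul, h, one_pow, map_one]

theorem Is3.arc {p q : Perm X} (hp : Is3 p) (hq : Is3 q) (h2 : (p * q) ^ 2 = 1) (h1 : p * q ≠ 1) :
    ∃ u, p u = q u ∧ p u ≠ u := by
  obtain ⟨a, b, c, hab, hac, hbc, rfl⟩ := hp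
  obtain ⟨d, e, f, hde, hdf, hef, rfl⟩ := hq
  obtain ⟨ι, rfl, rfl, rfl, ⟨i, rfl⟩, ⟨j, rfl⟩, ⟨k, rfl⟩⟩ := exists_emb hab hac hbc d e f
  rw [← viaEmb_c3, ← viaEmb_c3, ← map_mul] at h1 h2
  rw [← map_pow] at h2
  have h2' := (map_eq_one_iff _ (Perm.viaEmbeddingHom_injective ι)).1 h2
  have h1' := fun h => h1 ((map_eq_one_iff _ (Perm.viaEmbeddingHom_injective ι)).2 h)
  obtain ⟨u, hu, hu'⟩ :=
    fin_arc i j k (by simpa using hde) (by simpa using hdf) (by simpa using hef) h2' h1'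
  refine ⟨ι u, ?_⟩
  rw [← viaEmb_c3, ← viaEmb_c3, Perm.viaEmbeddingHom_apply, Perm.viaEmbeddingHom_apply,
    Perm.viaEmbedding_apply, Perm.viaEmbedding_apply]
  exact ⟨congrArg ι hu, fun h => hu' (ι.injective h)⟩

end RInf

namespace RInf
open Equiv

section
variable {X : Type*} [DecidableEq X]

theorem c3_a {a b c : X} (hab : a ≠ b) (hac : a ≠ c) : c3 a b c a = b := by
  simp [c3, swap_apply_def, hab, hac]

theorem c3_b {a b c : X} (hac : a ≠ c) (hbc : b ≠ c) : c3 a b c b = c := by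
  simp [c3, swap_apply_def, hac.symm, hbc.symm]

theorem c3_c {a b c : X} : c3 a b c c = a := by
  simp [c3]

theorem c3_other {a b c x : X} (ha : x ≠ a) (hb : x ≠ b) (hc : x ≠ c) : c3 a b c x = x := by
  simp [c3, swap_apply_def, ha, hb, hc]

theorem c3_apply {a b c : X} (hab : a ≠ b) (hac : a ≠ c) (hbc : b ≠ c) (x : X) :
    c3 a b c x = if x = a then b else if x = b then c else if x = c then a else x := by
  split_ifs with h1 h2 h3
  · subst h1; exact c3_a hab hac
  · subst h2; exact c3_b hac hbc
  · subst h3; exact c3_c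
  · exact c3_other h1 h2 h3

theorem is3_c3 {a b c : X} (hab : a ≠ b) (hac : a ≠ c) (hbc : b ≠ c) : Is3 (c3 a b c) :=
  ⟨a, b, c, hab, hac, hbc, rfl⟩

theorem conj_c3 (h : Perm X) (a b c : X) : h * c3 a b c * h⁻¹ = c3 (h a) (h b) (h c) := by
  have e : ∀ x y : X, h * swap x y * h⁻¹ = swap (h x) (h y) := fun x y => by
    rw [Equiv.mul_swap_eq_swap_mul, mul_inv_cancel_right]
  rw [c3, c3, ← e, ← e]; group

theorem Is3.conj {p : Perm X} (hp : Is3 p) (h : Perm X) : Is3 (h * p * h⁻¹) := by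
  obtain ⟨a, b, c, hab, hac, hbc, rfl⟩ := hp
  rw [conj_c3]
  exact is3_c3 (by simpa) (by simpa) (by simpa)

theorem Is3.mem {p : Perm X} (hp : Is3 p) {G : Subgroup (Perm X)} (hG : FAlt X ≤ G) : p ∈ G := by
  obtain ⟨a, b, c, hab, hac, hbc, rfl⟩ := hp
  apply hG
  apply Subgroup.subset_closure
  have : {x | c3 a b c x ≠ x} = {a, b, c} := by
    ext x
    simp only [c3_apply hab hac hbc, Set.mem_ofPred_eq, Set.mem_insert_iff, Set.mem_singleton_iff]
    grind
  simp only [Set.mem_ofPred_eq, this]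
  rw [Set.ncard_eq_three]
  exact ⟨a, b, c, hab, hac, hbc, rfl⟩

/-- Recover a 3-cycle from one of its arcs. -/
theorem Is3.eq_c3 {p : Perm X} (hp : Is3 p) {u v : X} (h : p u = v) (huv : u ≠ v) :
    u ≠ p v ∧ v ≠ p v ∧ p = c3 u v (p v) := by
  obtain ⟨a, b, c, hab, hac, hbc, rfl⟩ := hp
  have key := c3_apply hab hac hbc
  have h3 : u ≠ c3 a b c v ∧ v ≠ c3 a b c v := by grind
  refine ⟨h3.1, h3.2, ?_⟩
  ext x
  rw [c3_apply huv h3.1 h3.2]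
  grind

theorem Is3.ne_one {p : Perm X} (hp : Is3 p) : p ≠ 1 := by
  obtain ⟨a, b, c, hab, hac, hbc, rfl⟩ := hp
  intro h
  have := c3_a hab hac
  rw [h] at this
  exact hab this

theorem Is3.cube {p : Perm X} (hp : Is3 p) : p ^ 3 = 1 := by
  obtain ⟨a, b, c, hab, hac, hbc, rfl⟩ := hp
  ext x
  have key := c3_apply hab hac hbc
  simp only [pow_succ, pow_zero, one_mul, Perm.mul_apply, Perm.one_apply]
  grind

/-- Three 3-cycles pairwise sharing an arc share a common arc. -/
theorem common_arc {p q r : Perm X} (hp : Is3 p) (hq : Is3 q) (hr : Is3 r) (hpq : p ≠ q) {u v : X}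
    (hpu : p u = v) (hqu : q u = v) (huv : u ≠ v)
    (h1 : ∃ t, p t = r t ∧ p t ≠ t) (h2 : ∃ t, q t = r t ∧ q t ≠ t) : r u = v := by
  obtain ⟨hp1, hp2, hp3⟩ := hp.eq_c3 hpu huv
  obtain ⟨hq1, hq2, hq3⟩ := hq.eq_c3 hqu huv
  generalize p v = w at *
  generalize q v = w' at *
  subst hp3 hq3
  have hw : w ≠ w' := by rintro rfl; exact hpq rfl
  obtain ⟨t, ht, ht'⟩ := h1
  obtain ⟨s, hs, hs'⟩ := h2
  rw [c3_apply huv hp1 hp2] at ht ht'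
  rw [c3_apply huv hq1 hq2] at hs hs'
  obtain ⟨a, b, c, hab, hac, hbc, rfl⟩ := hr
  rw [c3_apply hab hac hbc] at ht hs ⊢
  clear hpu hqu hp hq hpq
  grind

theorem c3_mul_sq {u v w w' : X} (huv : u ≠ v) (h1 : u ≠ w) (h2 : v ≠ w) (h3 : u ≠ w')
    (h4 : v ≠ w') (hw : w ≠ w') :
    (c3 u v w * c3 u v w') ^ 2 = 1 ∧ c3 u v w * c3 u v w' ≠ 1 := by
  have k1 := c3_apply huv h1 h2
  have k2 := c3_apply huv h3 h4
  constructor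
  · ext x
    simp only [pow_succ, pow_zero, one_mul, Perm.mul_apply, Perm.one_apply]
    grind
  · intro h
    have := congrArg (fun e : Perm X => e u) h
    simp only [Perm.mul_apply, Perm.one_apply] at this
    grind

/-- Group theoretic characterization of 3-cycles, the hard direction. -/
theorem is3_of_pow [Infinite X] {G : Subgroup (Perm X)} (hG : FAlt X ≤ G) {g : Perm X}
    (h1 : g ≠ 1) (h3 : g ^ 3 = 1) (hc : ∀ h ∈ G, (g * (h * g * h⁻¹)) ^ 30 = 1) : Is3 g := by
  have hg3 : ∀ x, g (g (g x)) = x := fun x => by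
    have := congrArg (fun e : Perm X => e x) h3
    simpa [pow_succ] using this
  have inj := g.injective
  have hinj : ∀ x y, g x = g y → x = y := fun x y h => inj h
  obtain ⟨a, ha⟩ : ∃ a, g a ≠ a := by
    by_contra! hh
    exact h1 (Equiv.ext hh)
  obtain ⟨b, hb⟩ : ∃ b, g a = b := ⟨_, rfl⟩
  obtain ⟨c, hc'⟩ : ∃ c, g b = c := ⟨_, rfl⟩
  have hca : g c = a := by rw [← hc', ← hb]; exact hg3 a
  have hab : a ≠ b := by grind
  have hbc : b ≠ c := by grind
  have hac : a ≠ c := by grind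
  refine ⟨a, b, c, hab, hac, hbc, ?_⟩
  by_contra hne
  obtain ⟨d, hd⟩ : ∃ d, g d ≠ c3 a b c d := by
    by_contra! hh
    exact hne (Equiv.ext hh)
  rw [c3_apply hab hac hbc] at hd
  obtain ⟨e, he⟩ : ∃ e, g d = e := ⟨_, rfl⟩
  obtain ⟨f, hf⟩ : ∃ f, g e = f := ⟨_, rfl⟩
  have hfd : g f = d := by rw [← hf, ← he]; exact hg3 d
  have hda : d ≠ a := by grind
  have hdb : d ≠ b := by grind
  have hdc : d ≠ c := by grind
  have hde : d ≠ e := by grind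
  have hef : e ≠ f := by grind
  have hdf : d ≠ f := by grind
  have hea : e ≠ a := by grind
  have heb : e ≠ b := by grind
  have hec : e ≠ c := by grind
  have hfa : f ≠ a := by grind
  have hfb : f ≠ b := by grind
  have hfc : f ≠ c := by grind
  obtain ⟨i, hi⟩ := Infinite.exists_notMem_finset ({a, b, c, d, e, f} : Finset X)
  simp only [Finset.mem_insert, Finset.mem_singleton, not_or] at hi
  obtain ⟨hia, hib, hic, hid, hie, hif⟩ := hi
  have hh : swap a d * swap b i ∈ G := by
    have : swap a d * swap b i = c3 a d b * c3 d b i := by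
      simp only [c3, mul_assoc, swap_mul_self_mul]
    rw [this]
    exact G.mul_mem ((is3_c3 hda.symm hab hdb).mem hG)
      ((is3_c3 hdb (Ne.symm hid) (Ne.symm hib)).mem hG)
  have hw := hc _ hh
  generalize hwd : g * (swap a d * swap b i * g * (swap a d * swap b i)⁻¹) = w at hw
  have w_apply : ∀ x, w x = g (swap a d (swap b i (g (swap b i (swap a d x))))) := by
    intro x; rw [← hwd]; simp
  have sw : ∀ x y z : X, swap x y z = if z = x then y else if z = y then x else z :=
    fun x y z => swap_apply_def x y z
  have w0 : w a = f := by simp only [w_apply, sw]; grind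
  have w1 : w f = b := by simp only [w_apply, sw]; grind
  by_cases hgi : g i = i
  · have w2 : w b = c := by simp only [w_apply, sw]; grind
    have w3 : w c = e := by simp only [w_apply, sw]; grind
    have w4 : w e = d := by simp only [w_apply, sw]; grind
    have w5 : w d = i := by simp only [w_apply, sw]; grind
    have w6 : w i = a := by simp only [w_apply, sw]; grind
    have := congrArg (fun e : Perm X => e a) hw
    simp only [pow_succ, pow_zero, one_mul, Perm.mul_apply, Perm.one_apply,
      w0, w1, w2, w3, w4, w5, w6] at this
    exact hab this.symm
  · obtain ⟨j, hj⟩ : ∃ j, g i = j := ⟨_, rfl⟩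
    obtain ⟨k, hk⟩ : ∃ k, g j = k := ⟨_, rfl⟩
    have hki : g k = i := by rw [← hk, ← hj]; exact hg3 i
    have hji : j ≠ i := by grind
    have hjk : j ≠ k := by grind
    have hki' : k ≠ i := by grind
    have hja : j ≠ a := by grind
    have hjb : j ≠ b := by grind
    have hjc : j ≠ c := by grind
    have hjd : j ≠ d := by grind
    have hje : j ≠ e := by grind
    have hjf : j ≠ f := by grind
    have hka : k ≠ a := by grind
    have hkb : k ≠ b := by grind
    have hkc : k ≠ c := by grind
    have hkd : k ≠ d := by grind
    have hke : k ≠ e := by grind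
    have hkf : k ≠ f := by grind
    have w2 : w b = k := by simp only [w_apply, sw]; grind
    have w3 : w k = c := by simp only [w_apply, sw]; grind
    have w4 : w c = e := by simp only [w_apply, sw]; grind
    have w5 : w e = d := by simp only [w_apply, sw]; grind
    have w6 : w d = j := by simp only [w_apply, sw]; grind
    have w7 : w j = i := by simp only [w_apply, sw]; grind
    have w8 : w i = a := by simp only [w_apply, sw]; grind
    have := congrArg (fun e : Perm X => e a) hw
    simp only [pow_succ, pow_zero, one_mul, Perm.mul_apply, Perm.one_apply,
      w0, w1, w2, w3, w4, w5, w6, w7, w8] at this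
    exact hka this
end
end RInf

namespace RInf
open Equiv

section
variable {X : Type*} [DecidableEq X]

theorem c3_rot {x y z : X} (h1 : x ≠ y) (h2 : x ≠ z) (h3 : y ≠ z) : c3 x y z = c3 y z x := by
  ext t
  rw [c3_apply h1 h2 h3, c3_apply h3 h1.symm h2.symm]
  grind

theorem gen_mem {K : Subgroup (Perm X)} {a b : X} (hab : a ≠ b)
    (hK : ∀ x, x ≠ a → x ≠ b → c3 a b x ∈ K) {p : Perm X} (hp : Is3 p) : p ∈ K := by
  have hB : ∀ y z, y ≠ a → y ≠ b → z ≠ a → z ≠ b → y ≠ z → c3 b y z ∈ K := by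
    intro y z hya hyb hza hzb hyz
    have h := K.mul_mem (K.mul_mem (hK y hya hyb) (hK z hza hzb)) (K.inv_mem (hK y hya hyb))
    rwa [conj_c3, c3_a hab hya.symm, c3_b hya.symm hyb.symm, c3_other hza hzb hyz.symm] at h
  have hA : ∀ y z, y ≠ a → y ≠ b → z ≠ a → z ≠ b → y ≠ z → c3 y a z ∈ K := by
    intro y z hya hyb hza hzb hyz
    have h := hB y z hya hyb hza hzb hyz
    have h := K.mul_mem (K.mul_mem (hK y hya hyb) h) (K.inv_mem (hK y hya hyb))
    rwa [conj_c3, c3_c, c3_b hya.symm hyb.symm, c3_other hza hzb hyz.symm] at h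
  have hI : ∀ z, z ≠ a → z ≠ b → c3 b a z ∈ K := by
    intro z hza hzb
    have h := K.inv_mem (hK z hza hzb)
    have e : (c3 a b z)⁻¹ = c3 b a z := by
      rw [inv_eq_iff_mul_eq_one]
      ext t
      rw [Perm.mul_apply, c3_apply hab hza.symm hzb.symm, c3_apply hab.symm hzb.symm hza.symm]
      simp only [Perm.one_apply]
      grind
    rwa [e] at h
  have La : ∀ y z, y ≠ a → z ≠ a → y ≠ z → c3 a y z ∈ K := by
    intro y z hya hza hyz
    by_cases hy : y = b
    · subst hy; exact hK z hza hyz.symm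
    by_cases hz : z = b
    · subst hz
      rw [← c3_rot hza hyz.symm hya.symm]
      exact hI y hya hy
    · rw [← c3_rot hza hyz.symm hya.symm]
      exact hA z y hza hz hya hy hyz.symm
  have Lb : ∀ y z, y ≠ b → z ≠ b → y ≠ a → z ≠ a → y ≠ z → c3 b y z ∈ K := by
    intro y z hyb hzb hya hza hyz
    exact hB y z hya hyb hza hzb hyz
  obtain ⟨x, y, z, hxy, hxz, hyz, rfl⟩ := hp
  by_cases hxa : x = a
  · subst hxa; exact La y z hxy.symm hxz.symm hyz
  by_cases hya : y = a
  · subst hya; rw [c3_rot hxy hxz hyz]; exact La z x hyz.symm hxy hxz.symm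
  by_cases hza : z = a
  · subst hza; rw [← c3_rot hxz.symm hyz.symm hxy]; exact La x y hxz hyz hxy
  by_cases hxb : x = b
  · subst hxb; exact Lb y z hxy.symm hxz.symm hya hza hyz
  by_cases hyb : y = b
  · subst hyb; rw [c3_rot hxy hxz hyz]; exact Lb z x hyz.symm hxy hza hxa hxz.symm
  by_cases hzb : z = b
  · subst hzb; rw [← c3_rot hxz.symm hyz.symm hxy]; exact Lb x y hxz hyz hxa hya hxy
  have h := K.mul_mem (K.mul_mem (hK x hxa hxb) (hB y z hya hyb hza hzb hyz))
    (K.inv_mem (hK x hxa hxb))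
  rwa [conj_c3, c3_b (Ne.symm hxa) (Ne.symm hxb), c3_other hya hyb hxy.symm,
    c3_other hza hzb hxz.symm] at h

variable [Infinite X]

theorem is3_map {G : Subgroup (Perm X)} (hG : FAlt X ≤ G) (φ : G ≃* G) (g : G)
    (hg : Is3 (g : Perm X)) : Is3 (φ g : Perm X) := by
  apply is3_of_pow hG
  · intro h
    have h' : φ g = 1 := Subtype.ext h
    rw [map_eq_one_iff φ φ.injective] at h'
    exact hg.ne_one (by rw [h']; rfl)
  · have h : g ^ 3 = 1 := Subtype.ext hg.cube
    have h' : φ g ^ 3 = 1 := by rw [← map_pow, h, map_one]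
    exact congrArg Subtype.val h'
  · intro h hh
    obtain ⟨k, hk⟩ := φ.surjective ⟨h, hh⟩
    have h1 : (g * (k * g * k⁻¹)) ^ 30 = 1 := Subtype.ext (hg.pow30 (hg.conj k))
    have h2 : (φ g * (φ k * φ g * (φ k)⁻¹)) ^ 30 = 1 := by
      rw [← map_inv, ← map_mul, ← map_mul, ← map_mul, ← map_pow, h1, map_one]
    rw [hk] at h2
    exact congrArg Subtype.val h2

theorem pair_map {G : Subgroup (Perm X)} (hG : FAlt X ≤ G) (φ : G ≃* G) (g h : G)
    (hg : Is3 (g : Perm X)) (hh : Is3 (h : Perm X))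
    (hgh : ((g : Perm X) * h) ^ 2 = 1 ∧ (g : Perm X) * h ≠ 1) :
    ∃ t, (φ g : Perm X) t = (φ h : Perm X) t ∧ (φ g : Perm X) t ≠ t := by
  apply (is3_map hG φ g hg).arc (is3_map hG φ h hh)
  · have h1 : (g * h) ^ 2 = 1 := Subtype.ext hgh.1
    have h2 : (φ g * φ h) ^ 2 = 1 := by rw [← map_mul, ← map_pow, h1, map_one]
    exact congrArg Subtype.val h2
  · intro h1
    have h2 : φ g * φ h = 1 := Subtype.ext h1
    rw [← map_mul, map_eq_one_iff φ φ.injective] at h2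
    exact hgh.2 (congrArg Subtype.val h2)

theorem exists_rho {G : Subgroup (Perm X)} (hG : FAlt X ≤ G) (φ : G ≃* G) {a b : X}
    (hab : a ≠ b) : ∃ ρ : Perm X, ∀ x, x ≠ a → x ≠ b → ∀ g : G, (g : Perm X) = c3 a b x →
      (φ g : Perm X) = ρ * g * ρ⁻¹ := by
  have hex : ∀ x, ∃ g : G, x ≠ a → x ≠ b → (g : Perm X) = c3 a b x := by
    intro x
    by_cases h : x ≠ a ∧ x ≠ b
    · exact ⟨⟨c3 a b x, (is3_c3 hab h.1.symm h.2.symm).mem hG⟩, fun _ _ => rfl⟩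
    · exact ⟨1, fun h1 h2 => absurd ⟨h1, h2⟩ h⟩
  choose c hc using hex
  have hc3 : ∀ x, x ≠ a → x ≠ b → Is3 (c x : Perm X) := fun x h1 h2 => by
    rw [hc x h1 h2]; exact is3_c3 hab h1.symm h2.symm
  have hq3 : ∀ x, x ≠ a → x ≠ b → Is3 (φ (c x) : Perm X) := fun x h1 h2 =>
    is3_map hG φ _ (hc3 x h1 h2)
  have pair : ∀ x y, x ≠ a → x ≠ b → y ≠ a → y ≠ b → x ≠ y →
      ∃ t, (φ (c x) : Perm X) t = (φ (c y) : Perm X) t ∧ (φ (c x) : Perm X) t ≠ t := by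
    intro x y hxa hxb hya hyb hxy
    apply pair_map hG φ _ _ (hc3 x hxa hxb) (hc3 y hya hyb)
    rw [hc x hxa hxb, hc y hya hyb]
    exact c3_mul_sq hab hxa.symm hxb.symm hya.symm hyb.symm hxy
  have hcinj : ∀ x y, x ≠ a → x ≠ b → y ≠ a → y ≠ b → (c x : Perm X) = c y → x = y := by
    intro x y hxa hxb hya hyb h
    rw [hc x hxa hxb, hc y hya hyb] at h
    have := congrArg (fun e : Perm X => e b) h
    simpa only [c3_b hxa.symm hxb.symm, c3_b hya.symm hyb.symm] using this
  have hqinj : ∀ x y, x ≠ a → x ≠ b → y ≠ a → y ≠ b →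
      (φ (c x) : Perm X) = (φ (c y) : Perm X) → x = y := by
    intro x y hxa hxb hya hyb h
    exact hcinj x y hxa hxb hya hyb (congrArg Subtype.val (φ.injective (Subtype.ext h)))
  obtain ⟨x0, hx0⟩ := Infinite.exists_notMem_finset ({a, b} : Finset X)
  obtain ⟨y0, hy0⟩ := Infinite.exists_notMem_finset ({a, b, x0} : Finset X)
  obtain ⟨z0, hz0⟩ := Infinite.exists_notMem_finset ({a, b, x0, y0} : Finset X)
  simp only [Finset.mem_insert, Finset.mem_singleton, not_or] at hx0 hy0 hz0
  obtain ⟨hx0a, hx0b⟩ := hx0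
  obtain ⟨hy0a, hy0b, hyx0⟩ := hy0
  obtain ⟨hz0a, hz0b, hzx0, hzy0⟩ := hz0
  obtain ⟨u, hu, huv⟩ := pair x0 y0 hx0a hx0b hy0a hy0b (Ne.symm hyx0)
  obtain ⟨v, hv⟩ : ∃ v, (φ (c x0) : Perm X) u = v := ⟨_, rfl⟩
  rw [hv] at hu huv
  have huv := huv.symm
  have hall : ∀ x, x ≠ a → x ≠ b → (φ (c x) : Perm X) u = v := by
    intro x hxa hxb
    by_cases h1 : x = x0
    · rw [h1, hv]
    by_cases h2 : x = y0
    · rw [h2, hu]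
    exact common_arc (hq3 x0 hx0a hx0b) (hq3 y0 hy0a hy0b) (hq3 x hxa hxb)
      (fun h => hyx0 (hqinj _ _ hx0a hx0b hy0a hy0b h).symm) hv hu.symm huv
      (pair _ _ hx0a hx0b hxa hxb (Ne.symm h1)) (pair _ _ hy0a hy0b hxa hxb (Ne.symm h2))
  have hform := fun x hxa hxb => (hq3 x hxa hxb).eq_c3 (hall x hxa hxb) huv
  let r : X → X := fun x => if x = a then u else if x = b then v else (φ (c x) : Perm X) v
  have ra : r a = u := by simp [r]
  have rb : r b = v := by simp [r, hab.symm]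
  have rx : ∀ x, x ≠ a → x ≠ b → r x = (φ (c x) : Perm X) v := fun x h1 h2 => by simp [r, h1, h2]
  have rform : ∀ x, x ≠ a → x ≠ b →
      u ≠ r x ∧ v ≠ r x ∧ (φ (c x) : Perm X) = c3 u v (r x) := by
    intro x h1 h2
    rw [rx x h1 h2]
    exact hform x h1 h2
  have rinj : Function.Injective r := by
    intro x y hxy
    by_cases hxa : x = a
    · by_cases hya : y = a
      · rw [hxa, hya]
      by_cases hyb : y = b
      · rw [hxa, hyb, ra, rb] at hxy; exact absurd hxy huv
      · rw [hxa, ra] at hxy; exact absurd hxy (rform y hya hyb).1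
    by_cases hxb : x = b
    · by_cases hya : y = a
      · rw [hxb, hya, ra, rb] at hxy; exact absurd hxy.symm huv
      by_cases hyb : y = b
      · rw [hxb, hyb]
      · rw [hxb, rb] at hxy; exact absurd hxy (rform y hya hyb).2.1
    by_cases hya : y = a
    · rw [hya, ra] at hxy; exact absurd hxy.symm (rform x hxa hxb).1
    by_cases hyb : y = b
    · rw [hyb, rb] at hxy; exact absurd hxy.symm (rform x hxa hxb).2.1
    apply hqinj x y hxa hxb hya hyb
    rw [(rform x hxa hxb).2.2, (rform y hya hyb).2.2, hxy]
  have rsurj : Function.Surjective r := by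
    intro w
    by_cases hwu : w = u
    · exact ⟨a, by rw [ra, hwu]⟩
    by_cases hwv : w = v
    · exact ⟨b, by rw [rb, hwv]⟩
    by_contra hno
    push Not at hno
    have hm3 : Is3 (c3 u v w) := is3_c3 huv (Ne.symm hwu) (Ne.symm hwv)
    let m : G := ⟨c3 u v w, hm3.mem hG⟩
    have hp3 : Is3 (φ.symm m : Perm X) := is3_map hG φ.symm m hm3
    have hsh : ∀ x, x ≠ a → x ≠ b →
        ∃ t, (c x : Perm X) t = (φ.symm m : Perm X) t ∧ (c x : Perm X) t ≠ t := by
      intro x hxa hxb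
      have h := pair_map hG φ.symm (φ (c x)) m (hq3 x hxa hxb) hm3 (by
        rw [(rform x hxa hxb).2.2]
        exact c3_mul_sq huv (rform x hxa hxb).1 (rform x hxa hxb).2.1 (Ne.symm hwu) (Ne.symm hwv)
          (hno x))
      rwa [φ.symm_apply_apply] at h
    have hca : ∀ x, x ≠ a → x ≠ b → (c x : Perm X) a = b := fun x hxa hxb => by
      rw [hc x hxa hxb]; exact c3_a hab hxa.symm
    have hpa : (φ.symm m : Perm X) a = b :=
      common_arc (hc3 x0 hx0a hx0b) (hc3 y0 hy0a hy0b) hp3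
        (fun h => hyx0 (hcinj _ _ hx0a hx0b hy0a hy0b h).symm) (hca x0 hx0a hx0b)
        (hca y0 hy0a hy0b) hab (hsh x0 hx0a hx0b) (hsh y0 hy0a hy0b)
    obtain ⟨h1, h2, h3⟩ := hp3.eq_c3 hpa hab
    generalize (φ.symm m : Perm X) b = x at h1 h2 h3
    have hcx : c x = φ.symm m := Subtype.ext (by rw [hc x h1.symm h2.symm, h3])
    have hqx : φ (c x) = m := by rw [hcx, φ.apply_symm_apply]
    have : (φ (c x) : Perm X) v = w := by
      rw [hqx]; exact c3_b (Ne.symm hwu) (Ne.symm hwv)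
    exact hno x (by rw [rx x h1.symm h2.symm, this])
  refine ⟨Equiv.ofBijective r ⟨rinj, rsurj⟩, ?_⟩
  intro x hxa hxb g hg
  have hgc : g = c x := Subtype.ext (by rw [hg, hc x hxa hxb])
  rw [hg, conj_c3, hgc, (rform x hxa hxb).2.2]
  change c3 u v (r x) = c3 (r a) (r b) (r x)
  rw [ra, rb]

theorem exists_conj {G : Subgroup (Perm X)} (hG : FAlt X ≤ G) (φ : G ≃* G) :
    ∃ ρ : Perm X, ∀ g : G, (φ g : Perm X) = ρ * g * ρ⁻¹ := by
  obtain ⟨a, b, hab⟩ := exists_pair_ne X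
  obtain ⟨ρ, hρ⟩ := exists_rho hG φ hab
  refine ⟨ρ, ?_⟩
  let K : Subgroup G := MonoidHom.eqLocus (G.subtype.comp φ.toMonoidHom)
    ((MulAut.conj ρ).toMonoidHom.comp G.subtype)
  have hK : ∀ g : G, g ∈ K ↔ (φ g : Perm X) = ρ * g * ρ⁻¹ := fun g => Iff.rfl
  have h3 : ∀ g : G, Is3 (g : Perm X) → (φ g : Perm X) = ρ * g * ρ⁻¹ := by
    intro g hg
    have : (g : Perm X) ∈ K.map G.subtype := by
      apply gen_mem hab _ hg
      intro x hxa hxb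
      have hm := (is3_c3 hab hxa.symm hxb.symm).mem hG
      exact ⟨⟨_, hm⟩, (hK _).2 (hρ x hxa hxb _ rfl), rfl⟩
    obtain ⟨k, hk, hkg⟩ := this
    have : k = g := Subtype.ext hkg
    exact (hK g).1 (this ▸ hk)
  intro g
  obtain ⟨s, hs⟩ : ∃ s : Perm X, s = ρ⁻¹ * φ g * ρ := ⟨_, rfl⟩
  have hsg : ∀ p : Perm X, Is3 p → s * p * s⁻¹ = g * p * (g : Perm X)⁻¹ := by
    intro p hp
    let m : G := ⟨p, hp.mem hG⟩
    have e1 := h3 m hp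
    have e2 := h3 (g * m * g⁻¹) (hp.conj g)
    simp only [map_mul, map_inv, Subgroup.coe_mul, Subgroup.coe_inv] at e2
    rw [e1] at e2
    have e3 : (m : Perm X) = p := rfl
    rw [e3] at e2
    have e4 : s * p * s⁻¹ = ρ⁻¹ * (φ g * (ρ * p * ρ⁻¹) * (φ g : Perm X)⁻¹) * ρ := by
      rw [hs]; group
    rw [e4, e2]; group
  have hmem : ∀ x y z, x ≠ y → x ≠ z → y ≠ z →
      s x = (g : Perm X) x ∨ s x = (g : Perm X) y ∨ s x = (g : Perm X) z := by
    intro x y z hxy hxz hyz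
    have h := hsg _ (is3_c3 hxy hxz hyz)
    rw [conj_c3, conj_c3] at h
    by_contra! hcon
    have h' := congrArg (fun e : Perm X => e (s x)) h
    simp only [c3_other hcon.1 hcon.2.1 hcon.2.2] at h'
    rw [c3_a (by simpa using hxy) (by simpa using hxz)] at h'
    exact hxy (s.injective h').symm
  have hsx : s = g := by
    ext x
    obtain ⟨y, hy⟩ := Infinite.exists_notMem_finset ({x} : Finset X)
    obtain ⟨z, hz⟩ := Infinite.exists_notMem_finset ({x, y} : Finset X)
    obtain ⟨y', hy'⟩ := Infinite.exists_notMem_finset ({x, y, z} : Finset X)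
    obtain ⟨z', hz'⟩ := Infinite.exists_notMem_finset ({x, y, z, y'} : Finset X)
    simp only [Finset.mem_insert, Finset.mem_singleton, not_or] at hy hz hy' hz'
    have h1 := hmem x y z (Ne.symm hy) (Ne.symm hz.1) (Ne.symm hz.2)
    have h2 := hmem x y' z' (Ne.symm hy'.1) (Ne.symm hz'.1) (Ne.symm hz'.2.2.2)
    have hi : ∀ p q, (g : Perm X) p = (g : Perm X) q → p = q := fun p q h =>
      (g : Perm X).injective h
    grind
  rw [← hsx, hs]; group

/-- A set mapped into itself by an element with finite orbits is mapped onto itself. -/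
theorem inv_mem_of_mapsTo {Y : Type*} {g : Perm Y} {S : Set Y}
    (hfin : ∀ x : Y, (Set.range fun d : ℤ => (g ^ d) x).Finite)
    (hS : ∀ x ∈ S, g x ∈ S) {p : Y} (hp : p ∈ S) : g⁻¹ p ∈ S := by
  have hpow : ∀ n : ℕ, (g ^ n) p ∈ S := by
    intro n
    induction n with
    | zero => simpa using hp
    | succ n ih => rw [pow_succ', Perm.mul_apply]; exact hS _ ih
  have hni : ¬ Function.Injective (fun n : ℕ => (g ^ (n : ℤ)) p) := by
    intro hinj
    apply Set.infinite_range_of_injective hinj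
    apply (hfin p).subset
    rintro _ ⟨n, rfl⟩
    exact ⟨n, rfl⟩
  obtain ⟨m, n, hmn, hlt⟩ : ∃ m n : ℕ, (g ^ m) p = (g ^ n) p ∧ m < n := by
    simp only [Function.Injective, not_forall] at hni
    obtain ⟨m, n, h, hne⟩ := hni
    simp only [zpow_natCast] at h
    rcases lt_or_gt_of_ne hne with h' | h'
    · exact ⟨m, n, h, h'⟩
    · exact ⟨n, m, h.symm, h'⟩
  obtain ⟨k, rfl⟩ : ∃ k, n = m + (k + 1) := ⟨n - m - 1, by omega⟩
  rw [pow_add, Perm.mul_apply] at hmn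
  have h1 : p = (g ^ (k + 1)) p := (g ^ m).injective hmn
  rw [pow_succ', Perm.mul_apply] at h1
  have h2 : g⁻¹ p = (g ^ k) p := by
    rw [Perm.inv_eq_iff_eq]; exact h1
  rw [h2]; exact hpow k

theorem fix_eq {Y : Type*} {x τ σ : Perm Y}
    (hfin : ∀ y : Y, (Set.range fun d : ℤ => ((x⁻¹) ^ d) y).Finite)
    (h : x⁻¹ * τ * x = σ) (hsub : {y | σ y = y} ⊆ {y | τ y = y}) :
    {y | σ y = y} = {y | τ y = y} := by
  have hx : ∀ y, σ y = y ↔ τ (x y) = x y := by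
    intro y
    rw [← h, Perm.mul_apply, Perm.mul_apply, Perm.inv_eq_iff_eq]
  apply hsub.antisymm
  intro p hp
  have key := inv_mem_of_mapsTo (S := {y | τ y = y}) hfin (by
    intro y hy
    apply hsub
    show σ (x⁻¹ y) = x⁻¹ y
    rw [hx]
    simpa using hy) hp
  rw [inv_inv] at key
  exact (hx p).2 key

theorem exists_seq {S : Type*} (P : S → Prop) (r : S → S → Prop) (s0 : S) (h0 : P s0)
    (hstep : ∀ s, P s → ∃ t, P t ∧ r s t) : ∃ f : ℕ → S, ∀ n, r (f n) (f (n + 1)) := by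
  choose! F hF1 hF2 using hstep
  let f : ℕ → S := fun n => Nat.rec s0 (fun _ s => F s) n
  have hP : ∀ n, P (f n) := by
    intro n
    induction n with
    | zero => exact h0
    | succ n ih => exact hF1 _ ih
  exact ⟨f, fun n => hF2 _ (hP n)⟩

theorem step_down {τ : Perm X} (h : {y | τ y = y}.Infinite) :
    ∃ g : Perm X, Is3 g ∧ {y | (τ * g) y = y}.Infinite ∧
      {y | (τ * g) y = y} ⊂ {y | τ y = y} := by
  obtain ⟨t, ht, htc⟩ := h.exists_subset_card_eq 3
  obtain ⟨a, b, c, hab, hac, hbc, rfl⟩ := Finset.card_eq_three.1 htc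
  have ha : τ a = a := ht (by simp)
  have hb : τ b = b := ht (by simp)
  have hc : τ c = c := ht (by simp)
  have hi : ∀ p q, τ p = τ q → p = q := fun p q h => τ.injective h
  have key := c3_apply hab hac hbc
  have e : {y | (τ * c3 a b c) y = y} = {y | τ y = y} \ (({a, b, c} : Finset X) : Set X) := by
    ext y
    simp only [Perm.mul_apply, Set.mem_ofPred_eq, Set.mem_sdiff, Finset.mem_coe, Finset.mem_insert,
      Finset.mem_singleton]
    grind
  refine ⟨c3 a b c, is3_c3 hab hac hbc, ?_, ?_⟩
  · rw [e]; exact h.sdiff (Finset.finite_toSet _)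
  · rw [e]
    refine ⟨Set.sdiff_subset, fun hh => ?_⟩
    have := hh (show a ∈ {y | τ y = y} from ha)
    simp at this

theorem step_up {τ : Perm X} (h : {y | τ y = y}ᶜ.Infinite) :
    ∃ g : Perm X, Is3 g ∧ {y | (τ * g) y = y}ᶜ.Infinite ∧
      {y | τ y = y} ⊂ {y | (τ * g) y = y} := by
  obtain ⟨x, hx⟩ := h.nonempty
  have hx : τ x ≠ x := hx
  obtain ⟨y, hy⟩ : ∃ y, τ x = y := ⟨_, rfl⟩
  obtain ⟨z, hz, hz'⟩ := h.exists_notMem_finset {x, y}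
  have hz : τ z ≠ z := hz
  simp only [Finset.mem_insert, Finset.mem_singleton, not_or] at hz'
  have hi : ∀ p q, τ p = τ q → p = q := fun p q h => τ.injective h
  have hyx : y ≠ x := by rw [← hy]; exact hx
  have hyy : τ y ≠ y := by grind
  have key := c3_apply hyx (Ne.symm hz'.2) (Ne.symm hz'.1)
  refine ⟨c3 y x z, is3_c3 hyx (Ne.symm hz'.2) (Ne.symm hz'.1), ?_, ?_, ?_⟩
  · apply (h.sdiff (Finset.finite_toSet {x, y, z})).mono
    intro t
    simp only [Perm.mul_apply, Set.mem_ofPred_eq, Set.mem_sdiff, Finset.mem_coe, Finset.mem_insert,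
      Finset.mem_singleton, Set.mem_compl_iff]
    grind
  · intro t
    simp only [Perm.mul_apply, Set.mem_ofPred_eq]
    grind
  · intro hh
    have := hh (show y ∈ {t | (τ * c3 y x z) t = t} by
      simp only [Perm.mul_apply, Set.mem_ofPred_eq]; grind)
    exact hyy this

end

theorem twistedConj_equivalence {G : Type*} [Group G] (φ : G ≃* G) :
    Equivalence (TwistedConj φ) := by
  refine ⟨fun a => ⟨1, by simp⟩, ?_, ?_⟩
  · rintro a b ⟨x, rfl⟩
    exact ⟨x⁻¹, by simp [mul_assoc]⟩
  · rintro a b c ⟨x, rfl⟩ ⟨y, rfl⟩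
    exact ⟨x * y, by simp [mul_assoc]⟩

end RInf

/-- If `G` fully contains `FAlt X` and no element of `G` has an infinite orbit,
then `G` has the `R∞` property. -/
theorem rinfinity_of_no_infinite_orbit {X : Type*} [Infinite X]
    (G : Subgroup (Equiv.Perm X)) (hG : FAlt X ≤ G)
    (horb : ∀ g ∈ G, ∀ x : X, (Set.range fun d : ℤ => (g ^ d) x).Finite) :
    RInfinity ↥G := by
  classical
  intro φ
  obtain ⟨ρ, hρ⟩ := RInf.exists_conj hG φ
  let F : G → Set X := fun a => {y | (ρ⁻¹ * (a : Equiv.Perm X)) y = y}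
  -- twisted conjugate elements with comparable fixed point sets have equal fixed point sets
  have key : ∀ a b : G, TwistedConj φ a b → F b ⊆ F a → F b = F a := by
    rintro a b ⟨x, hx⟩ hsub
    refine RInf.fix_eq (x := x) (horb _ (G.inv_mem x.2)) ?_ hsub
    rw [← hx]
    simp only [Subgroup.coe_mul, Subgroup.coe_inv, hρ]
    group
  have key2 : ∀ a b : G, Quot.mk (TwistedConj φ) a = Quot.mk (TwistedConj φ) b →
      F b ⊆ F a → F b = F a := by
    intro a b h
    exact key a b ((RInf.twistedConj_equivalence φ).eqvGen_iff.1 (Quot.eqvGen_exact h))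
  have fin : ∀ f : ℕ → G, (∀ m n, m < n → F (f m) ⊂ F (f n) ∨ F (f n) ⊂ F (f m)) →
      Infinite (Quot (TwistedConj φ)) := by
    intro f hf
    have hlt : ∀ m n, m < n → Quot.mk (TwistedConj φ) (f m) ≠ Quot.mk (TwistedConj φ) (f n) := by
      intro m n hmn h
      rcases hf m n hmn with h' | h'
      · exact h'.ne (key2 _ _ h.symm h'.subset)
      · exact h'.ne (key2 _ _ h h'.subset)
    apply Infinite.of_injective (fun n => Quot.mk (TwistedConj φ) (f n))
    intro m n h
    rcases lt_trichotomy m n with h' | h' | h'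
    · exact absurd h (hlt m n h')
    · exact h'
    · exact absurd h.symm (hlt n m h')
  by_cases hinf : (F 1).Infinite
  · obtain ⟨f, hf⟩ := RInf.exists_seq (fun a : G => (F a).Infinite) (fun a b => F b ⊂ F a) 1 hinf
      (by
        intro a ha
        obtain ⟨g, hg, h1, h2⟩ := RInf.step_down (τ := ρ⁻¹ * (a : Equiv.Perm X)) ha
        obtain ⟨k, hk⟩ : ∃ k : G, (k : Equiv.Perm X) = g := ⟨⟨g, hg.mem hG⟩, rfl⟩
        have e : {y | (ρ⁻¹ * (a : Equiv.Perm X) * g) y = y} = F (a * k) := by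
          rw [mul_assoc, ← hk]
          rfl
        rw [e] at h1 h2
        exact ⟨a * k, h1, h2⟩)
    have hanti : StrictAnti (fun n => F (f n)) := strictAnti_nat_of_succ_lt hf
    exact fin f (fun m n hmn => Or.inr (hanti hmn))
  · have hcompl : (F 1)ᶜ.Infinite := (Set.not_infinite.1 hinf).infinite_compl
    obtain ⟨f, hf⟩ := RInf.exists_seq (fun a : G => (F a)ᶜ.Infinite) (fun a b => F a ⊂ F b) 1 hcompl
      (by
        intro a ha
        obtain ⟨g, hg, h1, h2⟩ := RInf.step_up (τ := ρ⁻¹ * (a : Equiv.Perm X)) ha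
        obtain ⟨k, hk⟩ : ∃ k : G, (k : Equiv.Perm X) = g := ⟨⟨g, hg.mem hG⟩, rfl⟩
        have e : {y | (ρ⁻¹ * (a : Equiv.Perm X) * g) y = y} = F (a * k) := by
          rw [mul_assoc, ← hk]
          rfl
        rw [e] at h1 h2
        exact ⟨a * k, h1, h2⟩)
    have hmono : StrictMono (fun n => F (f n)) := strictMono_nat_of_lt_succ hf
    exact fin f (fun m n hmn => Or.inl (hmono hmn))
end

section
/- Let G be an infinite residually finite group. Then there exist a set X and an injective group homomorphism ι : G → Equiv.Perm X such that the subgroup of Equiv.Perm X generated by the image ι(G) together with FAlt(X) has the R_∞ property. -/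
universe u

set_option linter.unusedSimpArgs false
set_option linter.deprecated false

namespace RInf

open Equiv

structure Is3_s17 {X : Type*} (σ : Perm X) (a b c : X) : Prop where
  ab : a ≠ b
  bc : b ≠ c
  ac : a ≠ c
  ha : σ a = b
  hb : σ b = c
  hc : σ c = a
  ho : ∀ x, x ≠ a → x ≠ b → x ≠ c → σ x = x

def IsTri {X : Type*} (σ : Perm X) : Prop := ∃ a b c, Is3_s17 σ a b c

section basic
variable {X : Type*} {σ τ : Perm X} {a b c d e f : X}

lemma Is3_s17.ext (h : Is3_s17 σ a b c) (h' : Is3_s17 τ a b c) : σ = τ := by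
  ext x
  by_cases h1 : x = a
  · rw [h1, h.ha, h'.ha]
  by_cases h2 : x = b
  · rw [h2, h.hb, h'.hb]
  by_cases h3 : x = c
  · rw [h3, h.hc, h'.hc]
  rw [h.ho x h1 h2 h3, h'.ho x h1 h2 h3]

lemma Is3_s17.rot (h : Is3_s17 σ a b c) : Is3_s17 σ b c a :=
  ⟨h.bc, h.ac.symm, h.ab.symm, h.hb, h.hc, h.ha, fun x h1 h2 h3 => h.ho x h3 h1 h2⟩

lemma Is3_s17.inv (h : Is3_s17 σ a b c) : Is3_s17 σ⁻¹ b a c :=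
  ⟨h.ab.symm, h.ac, h.bc, by rw [Perm.inv_eq_iff_eq, h.ha], by rw [Perm.inv_eq_iff_eq, h.hc],
    by rw [Perm.inv_eq_iff_eq, h.hb],
    fun x h1 h2 h3 => by rw [Perm.inv_eq_iff_eq, h.ho x h2 h1 h3]⟩

lemma Is3_s17.conj (h : Is3_s17 σ a b c) (g : Perm X) : Is3_s17 (g * σ * g⁻¹) (g a) (g b) (g c) := by
  refine ⟨g.injective.ne h.ab, g.injective.ne h.bc, g.injective.ne h.ac, ?_, ?_, ?_, ?_⟩
  · simp [h.ha]
  · simp [h.hb]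
  · simp [h.hc]
  · intro x h1 h2 h3
    have : σ (g⁻¹ x) = g⁻¹ x := by
      apply h.ho <;> (intro hh; rw [Perm.inv_eq_iff_eq] at hh; exact absurd hh (by assumption))
    simp only [Perm.mul_apply, this]
    simp

lemma exists_is3 (ab : a ≠ b) (bc : b ≠ c) (ac : a ≠ c) : ∃ σ : Perm X, Is3_s17 σ a b c := by
  classical
  refine ⟨swap a b * swap b c, ab, bc, ac, ?_, ?_, ?_, ?_⟩
  · simp [swap_apply_of_ne_of_ne ab ac]
  · simp [swap_apply_of_ne_of_ne ac.symm bc.symm]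
  · simp
  · intro x h1 h2 h3
    simp [swap_apply_of_ne_of_ne h2 h3, swap_apply_of_ne_of_ne h1 h2]

lemma Is3_s17.ne_one (h : Is3_s17 σ a b c) : σ ≠ 1 := by
  rintro rfl
  exact h.ab h.ha

lemma Is3_s17.pow3 (h : Is3_s17 σ a b c) : σ ^ 3 = 1 := by
  ext x
  simp only [pow_succ, pow_zero, one_mul, Perm.mul_apply, Perm.one_apply]
  have := h.ha; have := h.hb; have := h.hc; have := h.ho x
  by_cases h1 : x = a
  · simp [*]
  by_cases h2 : x = b
  · simp [*]
  by_cases h3 : x = c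
  · simp [*]
  simp [*]

lemma Is3_s17.mem (h : Is3_s17 σ a b c) : σ ∈ FAlt X := by
  apply Subgroup.subset_closure
  have : {x | σ x ≠ x} = {a, b, c} := by
    ext x
    have := h.ha; have := h.hb; have := h.hc; have := h.ho x
    have := h.ab; have := h.bc; have := h.ac
    simp only [Set.mem_setOf_eq, Set.mem_insert_iff, Set.mem_singleton_iff]
    grind
  rw [Set.mem_setOf_eq, this]
  exact Set.ncard_eq_three.2 ⟨a, b, c, h.ab, h.ac, h.bc, rfl⟩

def Test {G : Type*} [Group G] (σ τ : G) : Prop :=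
  σ * τ = τ * σ ∨ (σ * τ) ^ 2 = 1 ∨ (σ * τ⁻¹) ^ 2 = 1 ∨ (σ * τ) ^ 5 = 1

lemma classify (h : Is3_s17 σ a b c) (h' : Is3_s17 τ d e f) :
    (∀ x, σ x = x ∨ τ x = x) ∨
    (∃ a b c e f, Is3_s17 σ a b c ∧ Is3_s17 τ a e f ∧ b ≠ e ∧ b ≠ f ∧ c ≠ e ∧ c ≠ f) ∨
    (∃ a b c e, Is3_s17 σ a b c ∧ Is3_s17 τ a b e ∧ c ≠ e) ∨
    (∃ a b c e, Is3_s17 σ a b c ∧ Is3_s17 τ b a e ∧ c ≠ e) ∨ σ = τ ∨ σ = τ⁻¹ := by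
  have key : ∀ {a b c e f : X}, Is3_s17 σ a b c → Is3_s17 τ a e f → 
    (∃ a b c e f, Is3_s17 σ a b c ∧ Is3_s17 τ a e f ∧ b ≠ e ∧ b ≠ f ∧ c ≠ e ∧ c ≠ f) ∨
    (∃ a b c e, Is3_s17 σ a b c ∧ Is3_s17 τ a b e ∧ c ≠ e) ∨
    (∃ a b c e, Is3_s17 σ a b c ∧ Is3_s17 τ b a e ∧ c ≠ e) ∨ σ = τ ∨ σ = τ⁻¹ := by
    intro a b c e f h h'
    by_cases be : b = e
    · subst be
      by_cases cf : c = f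
      · subst cf
        exact .inr (.inr (.inr (.inl (h.ext h'))))
      · exact .inr (.inl ⟨_, _, _, _, h, h', cf⟩)
    by_cases cf : c = f
    · subst cf
      exact .inr (.inl ⟨_, _, _, _, h.rot.rot, h'.rot.rot, be⟩)
    by_cases bf : b = f
    · subst bf
      by_cases ce : c = e
      · subst ce
        exact .inr (.inr (.inr (.inr (h.rot.ext h'.inv.rot.rot))))
      · exact .inr (.inr (.inl ⟨_, _, _, _, h, h'.rot.rot, ce⟩))
    by_cases ce : c = e
    · subst ce
      exact .inr (.inr (.inl ⟨_, _, _, _, h.rot.rot, h', bf⟩))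
    exact .inl ⟨_, _, _, _, _, h, h', be, bf, ce, cf⟩
  by_cases hx : ∀ x, σ x = x ∨ τ x = x
  · exact .inl hx
  right
  push Not at hx
  obtain ⟨x, h1, h2⟩ := hx
  have e1 : ∃ p q, Is3_s17 σ x p q := by
    by_contra hh
    push Not at hh
    refine h1 (h.ho x ?_ ?_ ?_)
    · rintro rfl; exact hh _ _ h
    · rintro rfl; exact hh _ _ h.rot
    · rintro rfl; exact hh _ _ h.rot.rot
  have e2 : ∃ p q, Is3_s17 τ x p q := by
    by_contra hh
    push Not at hh
    refine h2 (h'.ho x ?_ ?_ ?_)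
    · rintro rfl; exact hh _ _ h'
    · rintro rfl; exact hh _ _ h'.rot
    · rintro rfl; exact hh _ _ h'.rot.rot
  obtain ⟨p, q, e1⟩ := e1
  obtain ⟨p', q', e2⟩ := e2
  exact key e1 e2

lemma sq_same (h : Is3_s17 σ a b c) (h' : Is3_s17 τ a b e) (ce : c ≠ e) : (σ * τ) ^ 2 = 1 := by
  have hce := h'.ho c h.ac.symm h.bc.symm ce
  have hec := h.ho e h'.ac.symm h'.bc.symm ce.symm
  ext x
  simp only [pow_succ, pow_zero, one_mul, Perm.mul_apply, Perm.one_apply]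
  by_cases x1 : x = a
  · simp [x1, h'.ha, h.hb, hce, h.hc]
  by_cases x2 : x = b
  · simp [x2, h'.hb, hec, h'.hc, h.ha]
  by_cases x3 : x = c
  · simp [x3, hce, h.hc, h'.ha, h.hb]
  by_cases x4 : x = e
  · simp [x4, h'.hc, h.ha, h'.hb, hec]
  simp [h.ho x x1 x2 x3, h'.ho x x1 x2 x4]

lemma ne_one_same (h : Is3_s17 σ a b c) (h' : Is3_s17 τ a b e) : σ * τ ≠ 1 := by
  intro hh
  have := congrArg (fun p : Perm X => p a) hh
  simp only [Perm.mul_apply, Perm.one_apply, h'.ha, h.hb] at this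
  exact h.ac this.symm

lemma test_tri (h : IsTri σ) (h' : IsTri τ) : Test σ τ := by
  obtain ⟨a, b, c, h⟩ := h
  obtain ⟨d, e, f, h'⟩ := h'
  rcases classify h h' with H | ⟨a, b, c, e, f, h, h', be, bf, ce, cf⟩ | ⟨a, b, c, e, h, h', ce⟩ |
    ⟨a, b, c, e, h, h', ce⟩ | H | H
  · exact .inl (Perm.Disjoint.commute (f := σ) (g := τ) H)
  · refine .inr (.inr (.inr ?_))
    have b' := h'.ho b h.ab.symm be bf
    have c' := h'.ho c h.ac.symm ce cf
    have e' := h.ho e h'.ab.symm be.symm ce.symm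
    have f' := h.ho f h'.ac.symm bf.symm cf.symm
    ext x
    simp only [pow_succ, pow_zero, one_mul, Perm.mul_apply, Perm.one_apply]
    by_cases x1 : x = a
    · simp [x1, h.ha, h.hb, h.hc, h'.ha, h'.hb, h'.hc, b', c', e', f']
    by_cases x2 : x = b
    · simp [x2, h.ha, h.hb, h.hc, h'.ha, h'.hb, h'.hc, b', c', e', f']
    by_cases x3 : x = c
    · simp [x3, h.ha, h.hb, h.hc, h'.ha, h'.hb, h'.hc, b', c', e', f']
    by_cases x4 : x = e
    · simp [x4, h.ha, h.hb, h.hc, h'.ha, h'.hb, h'.hc, b', c', e', f']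
    by_cases x5 : x = f
    · simp [x5, h.ha, h.hb, h.hc, h'.ha, h'.hb, h'.hc, b', c', e', f']
    simp [h.ho x x1 x2 x3, h'.ho x x1 x4 x5]
  · exact .inr (.inl (sq_same h h' ce))
  · exact .inr (.inr (.inl (sq_same h h'.inv ce)))
  · subst H; exact .inl rfl
  · subst H; left; simp

/-- sharing a directed edge -/
lemma edge (h : IsTri σ) (h' : IsTri τ) (h2 : (σ * τ) ^ 2 = 1) (h1 : σ * τ ≠ 1) :
    σ ≠ τ ∧ ∃ a b c e, Is3_s17 σ a b c ∧ Is3_s17 τ a b e ∧ c ≠ e := by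
  obtain ⟨a, b, c, h⟩ := h
  obtain ⟨d, e, f, h'⟩ := h'
  have ev : ∀ x, σ (τ (σ (τ x))) = x := by
    intro x
    have := congrArg (fun p : Perm X => p x) h2
    simpa [pow_two] using this
  have hne : σ ≠ τ := by
    rintro rfl
    have := ev a
    rw [h.ha, h.hb, h.hc, h.ha] at this
    exact h.ab this.symm
  refine ⟨hne, ?_⟩
  rcases classify h h' with H | ⟨a, b, c, e, f, h, h', be, bf, ce, cf⟩ | ⟨a, b, c, e, h, h', ce⟩ |
    ⟨a, b, c, e, h, h', ce⟩ | H | H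
  · exfalso
    have ta : ∀ x, σ x ≠ x → τ x = x := fun x hx => (H x).resolve_left hx
    have t1 := ta a (by rw [h.ha]; exact h.ab.symm)
    have t2 := ta b (by rw [h.hb]; exact h.bc.symm)
    have := ev a
    rw [t1, h.ha, t2, h.hb] at this
    exact h.ac this.symm
  · exfalso
    have e' := h.ho e h'.ab.symm be.symm ce.symm
    have f' := h.ho f h'.ac.symm bf.symm cf.symm
    have := ev a
    rw [h'.ha, e', h'.hb, f'] at this
    exact h'.ac this.symm
  · exact ⟨_, _, _, _, h, h', ce⟩
  · exfalso
    have e' := h.ho e h'.bc.symm h'.ac.symm ce.symm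
    have := ev a
    rw [h'.hb, e', h'.hc, h.hb] at this
    exact h.ac this.symm
  · exact absurd H hne
  · exact absurd (by rw [H]; simp) h1

/-- The converse characterisation of 3-cycles. -/
lemma tri_of_test [Infinite X] (h1 : σ ≠ 1) (h3 : σ ^ 3 = 1)
    (ht : ∀ h ∈ FAlt X, Test σ (h * σ * h⁻¹)) : IsTri σ := by
  have s3 : ∀ x, σ (σ (σ x)) = x := by
    intro x
    have := congrArg (fun p : Perm X => p x) h3
    simpa [pow_succ] using this
  have orb : ∀ x, σ x ≠ x → σ (σ x) ≠ x ∧ σ (σ x) ≠ σ x := by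
    intro x hx
    refine ⟨fun h => hx ?_, fun h => hx (σ.injective h)⟩
    have := s3 x
    rwa [h] at this
  obtain ⟨a, ha⟩ : ∃ a, σ a ≠ a := by
    by_contra hh
    push Not at hh
    exact h1 (Perm.ext hh)
  obtain ⟨b, hb⟩ : ∃ b, σ a = b := ⟨_, rfl⟩
  obtain ⟨c, hc⟩ : ∃ c, σ b = c := ⟨_, rfl⟩
  have hca : σ c = a := by rw [← hc, ← hb, s3]
  have ab : a ≠ b := by rw [← hb]; exact ha.symm
  have bc : b ≠ c := by rw [← hc, ← hb]; exact (orb a ha).2.symm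
  have ac : a ≠ c := by rw [← hc, ← hb]; exact (orb a ha).1.symm
  by_cases ho : ∀ x, x ≠ a → x ≠ b → x ≠ c → σ x = x
  · exact ⟨a, b, c, ab, bc, ac, hb, hc, hca, ho⟩
  exfalso
  push Not at ho
  obtain ⟨d, da, db, dc, hd⟩ := ho
  obtain ⟨e, he⟩ : ∃ e, σ d = e := ⟨_, rfl⟩
  obtain ⟨f, hf⟩ : ∃ f, σ e = f := ⟨_, rfl⟩
  have hfd : σ f = d := by rw [← hf, ← he, s3]
  have de : d ≠ e := by rw [← he]; exact hd.symm
  have ef : e ≠ f := by rw [← hf, ← he]; exact (orb d hd).2.symm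
  have df : d ≠ f := by rw [← hf, ← he]; exact (orb d hd).1.symm
  have ea : e ≠ a := by grind
  have eb : e ≠ b := by grind
  have ec : e ≠ c := by grind
  have fa : f ≠ a := by grind
  have fb : f ≠ b := by grind
  have fc : f ≠ c := by grind
  classical
  obtain ⟨g, hg⟩ := Infinite.exists_notMem_finset ({a, b, c, d, e, f} : Finset X)
  simp only [Finset.mem_insert, Finset.mem_singleton, not_or, ← ne_eq] at hg
  obtain ⟨ga, gb, gc, gd, ge, gf⟩ := hg
  obtain ⟨h, hh⟩ := exists_is3 da.symm gd.symm ga.symm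
  have h_b := hh.ho b ab.symm db.symm gb.symm
  have h_c := hh.ho c ac.symm dc.symm gc.symm
  have h_e := hh.ho e ea de.symm ge.symm
  have h_f := hh.ho f fa df.symm gf.symm
  have k := hh.inv
  have k_b := k.ho b db.symm ab.symm gb.symm
  have k_c := k.ho c dc.symm ac.symm gc.symm
  have k_e := k.ho e de.symm ea ge.symm
  have k_f := k.ho f df.symm fa gf.symm
  have ht := ht h hh.mem
  obtain ⟨i, hi⟩ : ∃ i, σ g = i := ⟨_, rfl⟩
  obtain ⟨j, hj⟩ : ∃ j, σ i = j := ⟨_, rfl⟩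
  have hjg : σ j = g := by rw [← hj, ← hi, s3]
  have v1 : σ⁻¹ a = c := by rw [Perm.inv_eq_iff_eq, hca]
  have v2 : σ⁻¹ b = a := by rw [Perm.inv_eq_iff_eq, hb]
  have v3 : σ⁻¹ c = b := by rw [Perm.inv_eq_iff_eq, hc]
  have v4 : σ⁻¹ d = f := by rw [Perm.inv_eq_iff_eq, hfd]
  have v5 : σ⁻¹ e = d := by rw [Perm.inv_eq_iff_eq, he]
  have v6 : σ⁻¹ f = e := by rw [Perm.inv_eq_iff_eq, hf]
  have v7 : σ⁻¹ g = j := by rw [Perm.inv_eq_iff_eq, hjg]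
  have v8 : σ⁻¹ i = g := by rw [Perm.inv_eq_iff_eq, hi]
  have v9 : σ⁻¹ j = i := by rw [Perm.inv_eq_iff_eq, hj]
  have ha1 := hh.ha
  have ha2 := hh.hb
  have ha3 := hh.hc
  have ka1 := k.ha
  have ka2 := k.hb
  have ka3 := k.hc
  by_cases gi : g = i
  · have gj : g = j := by grind
    subst gi
    subst gj
    rcases ht with ht | ht | ht | ht <;>
    · have := congrArg (fun p : Perm X => p d) ht
      simp only [pow_succ, pow_zero, one_mul, Perm.mul_apply, Perm.one_apply, mul_inv_rev, inv_inv,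
        hb, hc, hca, he, hf, hfd, hi, h_b, h_c, h_e, h_f, k_b, k_c, k_e, k_f,
        v1, v2, v3, v4, v5, v6, v7, ha1, ha2, ha3, ka1, ka2, ka3] at this
      simp_all
  · have gj : g ≠ j := by grind
    have ij : i ≠ j := by grind
    have := s3 i
    have : i ≠ a ∧ i ≠ b ∧ i ≠ c ∧ i ≠ d ∧ i ≠ e ∧ i ≠ f := by
      refine ⟨?_, ?_, ?_, ?_, ?_, ?_⟩ <;> intro hh <;> simp_all
    obtain ⟨ia, ib, ic, id, ie, ifx⟩ := this
    have : j ≠ a ∧ j ≠ b ∧ j ≠ c ∧ j ≠ d ∧ j ≠ e ∧ j ≠ f := by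
      refine ⟨?_, ?_, ?_, ?_, ?_, ?_⟩ <;> intro hh <;> simp_all
    obtain ⟨ja, jb, jc, jd, je, jf⟩ := this
    have h_i := hh.ho i ia id (Ne.symm gi)
    have h_j := hh.ho j ja jd gj.symm
    have k_i := k.ho i id ia (Ne.symm gi)
    have k_j := k.ho j jd ja gj.symm
    rcases ht with ht | ht | ht | ht <;>
    · have := congrArg (fun p : Perm X => p d) ht
      simp only [pow_succ, pow_zero, one_mul, Perm.mul_apply, Perm.one_apply, mul_inv_rev, inv_inv,
        hb, hc, hca, he, hf, hfd, hi, hj, hjg, h_b, h_c, h_e, h_f, k_b, k_c, k_e, k_f, h_i, h_j,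
        k_i, k_j, v8, v9,
        v1, v2, v3, v4, v5, v6, v7, ha1, ha2, ha3, ka1, ka2, ka3] at this
      simp_all

end basic

section aut
variable {X : Type*}

lemma inv_app (g : Perm X) (x : X) : g⁻¹ (g x) = x := g.symm_apply_apply x

lemma app_inv (g : Perm X) (x : X) : g (g⁻¹ x) = x := g.apply_symm_apply x

lemma IsTri.moved {ρ : Perm X} (h : IsTri ρ) {x : X} (hx : ρ x ≠ x) :
    Is3_s17 ρ x (ρ x) (ρ (ρ x)) := by
  obtain ⟨a, b, c, h⟩ := h
  by_cases h1 : x = a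
  · rw [h1, h.ha, h.hb]; exact h
  by_cases h2 : x = b
  · rw [h2, h.hb, h.hc]; exact h.rot
  by_cases h3 : x = c
  · rw [h3, h.hc, h.ha]; exact h.rot.rot
  exact absurd (h.ho x h1 h2 h3) hx

lemma common_edge {σ τ ρ : Perm X} {p q r t : X} (h1 : Is3_s17 σ p q r) (h2 : Is3_s17 τ p q t)
    (hrt : r ≠ t) (hρ : IsTri ρ) (hs : (ρ * σ) ^ 2 = 1) (hs' : ρ * σ ≠ 1)
    (ht : (ρ * τ) ^ 2 = 1) (ht' : ρ * τ ≠ 1) : ρ p = q := by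
  obtain ⟨-, u, b, c, e, e1, e2, -⟩ := edge hρ ⟨_, _, _, h1⟩ hs hs'
  obtain ⟨-, v, b', c', e', f1, f2, -⟩ := edge hρ ⟨_, _, _, h2⟩ ht ht'
  have hu : u = p ∨ u = q ∨ u = r := by
    by_contra hh
    push Not at hh
    have := h1.ho u hh.1 hh.2.1 hh.2.2
    rw [e2.ha] at this
    exact e2.ab this.symm
  have hv : v = p ∨ v = q ∨ v = t := by
    by_contra hh
    push Not at hh
    have := h2.ho v hh.1 hh.2.1 hh.2.2
    rw [f2.ha] at this
    exact f2.ab this.symm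
  have E : ρ u = σ u := by rw [e1.ha, e2.ha]
  have F : ρ v = τ v := by rw [f1.ha, f2.ha]
  rcases hu with rfl | rfl | rfl
  · rw [E, h1.ha]
  · rcases hv with rfl | rfl | rfl
    · rw [F, h2.ha]
    · rw [E, h1.hb, h2.hb] at F
      exact absurd F hrt
    · rw [h1.hb] at E
      rw [h2.hc] at F
      exfalso
      have m := hρ.moved (x := u) (by rw [E]; exact h1.bc.symm)
      rw [E] at m
      have := m.ho v h2.bc.symm hrt.symm
      by_cases hv : v = ρ r
      · have hc := m.hc
        rw [← hv, F] at hc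
        exact h1.ab hc
      · rw [F] at this
        exact h2.ac (this hv)
  · rcases hv with rfl | rfl | rfl
    · rw [F, h2.ha]
    · rw [h1.hc] at E
      rw [h2.hb] at F
      exfalso
      have m := hρ.moved (x := v) (by rw [F]; exact h2.bc.symm)
      rw [F] at m
      have := m.ho u h1.bc.symm hrt
      by_cases hv : u = ρ t
      · have hc := m.hc
        rw [← hv, E] at hc
        exact h1.ab hc
      · rw [E] at this
        exact h1.ac (this hv)
    · rw [h1.hc] at E
      rw [h2.hc] at F
      exact absurd (ρ.injective (E.trans F.symm)) hrt

def TestAll {G : Type*} [Group G] (σ : G) : Prop :=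
  σ ≠ 1 ∧ σ ^ 3 = 1 ∧ ∀ h : G, Test σ (h * σ * h⁻¹)

lemma Test.map {G : Type*} [Group G] (φ : G ≃* G) {σ τ : G} (h : Test σ τ) :
    Test (φ σ) (φ τ) := by
  rcases h with h | h | h | h
  · exact .inl (by simpa using congrArg φ h)
  · exact .inr (.inl (by simpa using congrArg φ h))
  · exact .inr (.inr (.inl (by simpa using congrArg φ h)))
  · exact .inr (.inr (.inr (by simpa using congrArg φ h)))

lemma TestAll.map {G : Type*} [Group G] (φ : G ≃* G) {σ : G} (h : TestAll σ) :
    TestAll (φ σ) := by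
  refine ⟨by simpa using h.1, by rw [← map_pow, h.2.1, map_one], fun k => ?_⟩
  have := (h.2.2 (φ.symm k)).map φ
  simpa using this

variable {H : Subgroup (Perm X)}

lemma testAll_iff [Infinite X] (hH : FAlt X ≤ H) (σ : H) :
    TestAll σ ↔ IsTri (σ : Perm X) := by
  constructor
  · rintro ⟨h1, h2, h3⟩
    apply tri_of_test
    · simpa using h1
    · exact_mod_cast congrArg Subtype.val h2
    · intro h hh
      rcases h3 ⟨h, hH hh⟩ with k | k | k | k
      · exact .inl (by simpa using congrArg Subtype.val k)
      · exact .inr (.inl (by simpa using congrArg Subtype.val k))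
      · exact .inr (.inr (.inl (by simpa using congrArg Subtype.val k)))
      · exact .inr (.inr (.inr (by simpa using congrArg Subtype.val k)))
  · intro ht
    obtain ⟨a, b, c, h⟩ := id ht
    refine ⟨fun hh => h.ne_one (by simp [hh]), Subtype.ext (by simpa using h.pow3), fun k => ?_⟩
    rcases test_tri ht ⟨_, _, _, h.conj k⟩ with k | k | k | k
    · exact .inl (Subtype.ext (by simpa using k))
    · exact .inr (.inl (Subtype.ext (by simpa using k)))
    · exact .inr (.inr (.inl (Subtype.ext (by simpa using k))))
    · exact .inr (.inr (.inr (Subtype.ext (by simpa using k))))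

lemma tri_map [Infinite X] (hH : FAlt X ≤ H) (φ : H ≃* H) {σ : H} (h : IsTri (σ : Perm X)) :
    IsTri (φ σ : Perm X) :=
  (testAll_iff hH _).1 (((testAll_iff hH _).2 h).map φ)

lemma sq_map (φ : H ≃* H) {σ τ : H} (h : ((σ : Perm X) * τ) ^ 2 = 1) :
    ((φ σ : Perm X) * φ τ) ^ 2 = 1 := by
  have : (σ * τ) ^ 2 = 1 := Subtype.ext (by simpa using h)
  have := congrArg (fun z => (φ z : Perm X)) this
  simpa using this

lemma ne_map (φ : H ≃* H) {σ τ : H} (h : (σ : Perm X) * τ ≠ 1) :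
    (φ σ : Perm X) * φ τ ≠ 1 := by
  intro hh
  apply h
  have : φ (σ * τ) = 1 := Subtype.ext (by simpa using hh)
  have := (map_eq_one_iff φ φ.injective).1 this
  simpa using congrArg Subtype.val this

/-- A homomorphism from `H` to `Perm X` fixing a fan of 3-cycles is the inclusion. -/
lemma eq_of_fan [Infinite X] (hH : FAlt X ≤ H) (ψ : H →* Perm X) {a b : X} (hab : a ≠ b)
    (K : X → H) (hK : ∀ x, x ≠ a → x ≠ b → Is3_s17 (K x : Perm X) a b x)
    (hf : ∀ x, x ≠ a → x ≠ b → ψ (K x) = K x) (h : H) : ψ h = h := by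
  let F : X → X → X → Prop := fun x y z => ∃ c : H, Is3_s17 (c : Perm X) x y z ∧ ψ c = c
  have Frot : ∀ {x y z}, F x y z → F y z x := fun ⟨c, h, h'⟩ => ⟨c, h.rot, h'⟩
  have Finv : ∀ {x y z}, F x y z → F y x z := fun ⟨c, h, h'⟩ => ⟨c⁻¹, h.inv, by simp [h']⟩
  have Fconj : ∀ {x y z} (d : H), ψ d = d → F x y z →
      F ((d : Perm X) x) ((d : Perm X) y) ((d : Perm X) z) :=
    fun d hd ⟨c, h, h'⟩ => ⟨d * c * d⁻¹, h.conj d, by simp [h', hd]⟩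
  have F0 : ∀ x, x ≠ a → x ≠ b → F a b x := fun x h1 h2 => ⟨K x, hK x h1 h2, hf x h1 h2⟩
  have Fb : ∀ x y, x ≠ a → x ≠ b → y ≠ a → y ≠ b → x ≠ y → F b x y := by
    intro x y xa xb ya yb xy
    have := Fconj (K x) (hf x xa xb) (F0 y ya yb)
    rwa [(hK x xa xb).ha, (hK x xa xb).hb, (hK x xa xb).ho y ya yb xy.symm] at this
  have Fa : ∀ x y, x ≠ a → x ≠ b → y ≠ a → y ≠ b → x ≠ y → F a x y := by
    intro x y xa xb ya yb xy
    have := Fconj (K x)⁻¹ (by simp [hf x xa xb]) (F0 y ya yb)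
    rw [Subgroup.coe_inv, (hK x xa xb).inv.hb, (hK x xa xb).inv.ha,
      (hK x xa xb).inv.ho y yb ya xy.symm] at this
    exact Finv this
  have F3 : ∀ x y z, x ≠ a → x ≠ b → y ≠ a → y ≠ b → z ≠ a → z ≠ b → x ≠ y → y ≠ z → x ≠ z →
      F x y z := by
    intro x y z xa xb ya yb za zb xy yz xz
    have := Fconj (K x) (hf x xa xb) (Fb y z ya yb za zb yz)
    rwa [(hK x xa xb).hb, (hK x xa xb).ho y ya yb xy.symm,
      (hK x xa xb).ho z za zb xz.symm] at this
  have Fall' : ∀ x y z, x ≠ y → y ≠ z → x ≠ z → z ≠ a → z ≠ b → F x y z := by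
    intro x y z xy yz xz za zb
    by_cases xa : x = a
    · subst xa
      by_cases yb : y = b
      · subst yb; exact F0 z za zb
      · exact Fa y z xy.symm yb za zb yz
    by_cases xb : x = b
    · subst xb
      by_cases ya : y = a
      · subst ya; exact Finv (F0 z za zb)
      · exact Fb y z ya xy.symm za zb yz
    by_cases ya : y = a
    · subst ya
      exact Finv (Fa x z xa xb za zb xz)
    by_cases yb : y = b
    · subst yb
      exact Finv (Fb x z xa xb za zb xz)
    exact F3 x y z xa xb ya yb za zb xy yz xz
  have Fall : ∀ x y z, x ≠ y → y ≠ z → x ≠ z → F x y z := by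
    intro x y z xy yz xz
    by_cases hz : z ≠ a ∧ z ≠ b
    · exact Fall' x y z xy yz xz hz.1 hz.2
    by_cases hx : x ≠ a ∧ x ≠ b
    · exact Frot (Frot (Fall' y z x yz xz.symm xy.symm hx.1 hx.2))
    · refine Frot (Fall' z x y xz.symm xy yz.symm ?_ ?_) <;> grind
  have Fix : ∀ c : H, IsTri (c : Perm X) → ψ c = c := by
    rintro c ⟨x, y, z, h⟩
    obtain ⟨d, hd, hd'⟩ := Fall x y z h.ab h.bc h.ac
    have : c = d := Subtype.ext (h.ext hd)
    rw [this, hd']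
  by_contra hne
  obtain ⟨x, hx⟩ : ∃ x, ψ h x ≠ (h : Perm X) x := by
    by_contra hh
    push Not at hh
    exact hne (Perm.ext hh)
  classical
  set w := (h : Perm X)⁻¹ (ψ h x) with hw
  have hwx : w ≠ x := by
    intro hh
    rw [hw, Perm.inv_eq_iff_eq] at hh
    exact hx hh
  obtain ⟨y, hy⟩ := Infinite.exists_notMem_finset ({x, w} : Finset X)
  obtain ⟨z, hz⟩ := Infinite.exists_notMem_finset ({x, w, y} : Finset X)
  simp only [Finset.mem_insert, Finset.mem_singleton, not_or, ← ne_eq] at hy hz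
  obtain ⟨c, hc⟩ := exists_is3 hy.1.symm hz.2.2.symm hz.1.symm
  let c' : H := ⟨c, hH hc.mem⟩
  have e1 := Fix c' ⟨_, _, _, hc⟩
  have e2 := Fix (h * c' * h⁻¹) ⟨_, _, _, hc.conj h⟩
  simp only [map_mul, map_inv, e1, Subgroup.coe_mul, Subgroup.coe_inv] at e2
  have e3 := congrArg (fun p : Perm X => p (ψ h x)) e2
  simp only [Perm.mul_apply, inv_app] at e3
  rw [← hw] at e3
  have hcw : c w = w := hc.ho w hwx hy.2.symm hz.2.1.symm
  have e4 : ψ h (c x) = (h : Perm X) (c w) := e3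
  rw [hcw, hc.ha, hw, app_inv] at e4
  exact hy.1 ((ψ h).injective e4)

theorem aut_conj [Infinite X] (hH : FAlt X ≤ H) (φ : H ≃* H) :
    ∃ s : Perm X, ∀ h : H, (φ h : Perm X) = s * h * s⁻¹ := by
  classical
  obtain ⟨a⟩ : Nonempty X := inferInstance
  obtain ⟨b, hb⟩ := Infinite.exists_notMem_finset ({a} : Finset X)
  obtain ⟨x₁, hx₁⟩ := Infinite.exists_notMem_finset ({a, b} : Finset X)
  obtain ⟨x₂, hx₂⟩ := Infinite.exists_notMem_finset ({a, b, x₁} : Finset X)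
  simp only [Finset.mem_insert, Finset.mem_singleton, not_or, ← ne_eq] at hb hx₁ hx₂
  have hK : ∀ x, ∃ k : H, x ≠ a → x ≠ b → Is3_s17 (k : Perm X) a b x := by
    intro x
    by_cases hx : x ≠ a ∧ x ≠ b
    · obtain ⟨k, hk⟩ := exists_is3 hb.symm hx.2.symm hx.1.symm
      exact ⟨⟨k, hH hk.mem⟩, fun _ _ => hk⟩
    · exact ⟨1, fun h1 h2 => absurd ⟨h1, h2⟩ hx⟩
  choose K hK using hK
  have K1 := hK x₁ hx₁.1 hx₁.2
  have K2 := hK x₂ hx₂.1 hx₂.2.1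
  have tri : ∀ x, x ≠ a → x ≠ b → IsTri (φ (K x) : Perm X) :=
    fun x h1 h2 => tri_map hH φ ⟨_, _, _, hK x h1 h2⟩
  have sq : ∀ x y, x ≠ a → x ≠ b → y ≠ a → y ≠ b → x ≠ y →
      ((φ (K x) : Perm X) * φ (K y)) ^ 2 = 1 :=
    fun x y xa xb ya yb xy => sq_map φ (sq_same (hK x xa xb) (hK y ya yb) xy)
  have ne : ∀ x y, x ≠ a → x ≠ b → y ≠ a → y ≠ b → (φ (K x) : Perm X) * φ (K y) ≠ 1 :=
    fun x y xa xb ya yb => ne_map φ (ne_one_same (hK x xa xb) (hK y ya yb))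
  obtain ⟨-, p, q, r, t, e1, e2, hrt⟩ := edge (tri x₁ hx₁.1 hx₁.2) (tri x₂ hx₂.1 hx₂.2.1)
    (sq x₁ x₂ hx₁.1 hx₁.2 hx₂.1 hx₂.2.1 hx₂.2.2.symm) (ne x₁ x₂ hx₁.1 hx₁.2 hx₂.1 hx₂.2.1)
  have hpq : ∀ x, x ≠ a → x ≠ b → (φ (K x) : Perm X) p = q := by
    intro x xa xb
    by_cases h1 : x = x₁
    · rw [h1]; exact e1.ha
    by_cases h2 : x = x₂
    · rw [h2]; exact e2.ha
    exact common_edge e1 e2 hrt (tri x xa xb) (sq _ _ xa xb hx₁.1 hx₁.2 h1)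
      (ne _ _ xa xb hx₁.1 hx₁.2) (sq _ _ xa xb hx₂.1 hx₂.2.1 h2) (ne _ _ xa xb hx₂.1 hx₂.2.1)
  have pq := e1.ab
  have h3 : ∀ x, x ≠ a → x ≠ b → Is3_s17 (φ (K x) : Perm X) p q ((φ (K x) : Perm X) q) := by
    intro x xa xb
    have := (tri x xa xb).moved (x := p) (by rw [hpq x xa xb]; exact pq.symm)
    rwa [hpq x xa xb] at this
  let s : X → X := fun x => if x = a then p else if x = b then q else (φ (K x) : Perm X) q
  have sa : s a = p := by simp [s]
  have sb : s b = q := by simp [s, hb]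
  have sx : ∀ x, x ≠ a → x ≠ b → s x = (φ (K x) : Perm X) q := by
    intro x xa xb
    simp [s, xa, xb]
  have inj0 : ∀ x y, x ≠ a → x ≠ b → y ≠ a → y ≠ b → s x = s y → x = y := by
    intro x y xa xb ya yb h
    have h4 := h3 x xa xb
    rw [← sx x xa xb, h, sx y ya yb] at h4
    have : φ (K x) = φ (K y) := Subtype.ext (h4.ext (h3 y ya yb))
    have := φ.injective this
    have h5 := (hK x xa xb).hb
    rw [this, (hK y ya yb).hb] at h5
    exact h5.symm
  have sne : ∀ x, x ≠ a → x ≠ b → s x ≠ p ∧ s x ≠ q := by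
    intro x xa xb
    rw [sx x xa xb]
    exact ⟨(h3 x xa xb).ac.symm, (h3 x xa xb).bc.symm⟩
  have inj : Function.Injective s := by
    intro x y h
    have := inj0 x y; have := sne x; have := sne y
    grind
  have surj : Function.Surjective s := by
    intro w
    by_cases wp : w = p
    · exact ⟨a, by rw [sa, wp]⟩
    by_cases wq : w = q
    · exact ⟨b, by rw [sb, wq]⟩
    by_contra hw
    push Not at hw
    obtain ⟨c, hc⟩ := exists_is3 pq (Ne.symm wq) (Ne.symm wp)
    obtain ⟨d, hd⟩ := φ.surjective ⟨c, hH hc.mem⟩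
    have hd' : (φ d : Perm X) = c := by rw [hd]
    rw [← hd'] at hc
    have hdd : d = φ.symm (φ d) := by simp
    have dtri : IsTri (d : Perm X) := by
      rw [hdd]
      exact tri_map hH φ.symm ⟨_, _, _, hc⟩
    have dsq : ∀ x, x ≠ a → x ≠ b → ((d : Perm X) * K x) ^ 2 = 1 := by
      intro x xa xb
      have := sq_map φ.symm (sq_same hc (h3 x xa xb) (by rw [← sx x xa xb]; exact (hw x).symm))
      simpa using this
    have dne : ∀ x, x ≠ a → x ≠ b → (d : Perm X) * K x ≠ 1 := by
      intro x xa xb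
      have := ne_map φ.symm (ne_one_same hc (h3 x xa xb))
      simpa using this
    have dab := common_edge K1 K2 hx₂.2.2.symm dtri (dsq _ hx₁.1 hx₁.2) (dne _ hx₁.1 hx₁.2)
      (dsq _ hx₂.1 hx₂.2.1) (dne _ hx₂.1 hx₂.2.1)
    have m := dtri.moved (x := a) (by rw [dab]; exact hb)
    rw [dab] at m
    have : d = K ((d : Perm X) b) := Subtype.ext (m.ext (hK _ m.ac.symm m.bc.symm))
    apply hw ((d : Perm X) b)
    rw [sx _ m.ac.symm m.bc.symm, ← this, hc.hb]
  let S : Perm X := Equiv.ofBijective s ⟨inj, surj⟩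
  have hS : ∀ x, S x = s x := fun x => rfl
  refine ⟨S, fun h => ?_⟩
  let ψ : H →* Perm X := (MulAut.conj S⁻¹).toMonoidHom.comp (H.subtype.comp φ.toMonoidHom)
  have hψ : ∀ h, ψ h = S⁻¹ * φ h * S := fun h => by simp [ψ]
  have key := eq_of_fan hH ψ hb.symm K hK (fun x xa xb => by
    rw [hψ]
    have h4 : Is3_s17 (φ (K x) : Perm X) (S a) (S b) (S x) := by
      rw [hS, hS, hS, sa, sb, sx x xa xb]; exact h3 x xa xb
    have := h4.conj S⁻¹
    simp only [inv_app, inv_inv] at this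
    exact this.ext (hK x xa xb)) h
  rw [hψ] at key
  rw [← key]
  group

end aut

section final
variable {X : Type*}

def Fx (t : Perm X) : Set X := {x | t x = x}

lemma mem_Fx {t : Perm X} {x : X} : x ∈ Fx t ↔ t x = x := Iff.rfl

lemma step_inc (t : Perm X) (ht : (Fx t)ᶜ.Infinite) :
    ∃ k ∈ FAlt X, (Fx (t * k))ᶜ.Infinite ∧ Fx t ⊂ Fx (t * k) := by
  obtain ⟨x, hx⟩ := ht.nonempty
  obtain ⟨z, hz, hz'⟩ := ht.exists_notMem_finite (Set.toFinite {x, t⁻¹ x})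
  simp only [Set.mem_insert_iff, Set.mem_singleton_iff, not_or, ← ne_eq] at hz'
  rw [Set.mem_compl_iff, mem_Fx] at hx hz
  have hxy : x ≠ t⁻¹ x := by
    intro h
    exact hx (by rw [eq_comm, Perm.inv_eq_iff_eq] at h; exact h.symm)
  obtain ⟨k, hk⟩ := exists_is3 hxy hz'.2.symm hz'.1.symm
  have hy : t (t⁻¹ x) ≠ t⁻¹ x := by rw [app_inv]; exact hxy
  refine ⟨k, hk.mem, ?_, ?_, ?_⟩
  · refine (ht.diff (Set.toFinite {x, t⁻¹ x, z})).mono ?_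
    rintro w ⟨h1, h2⟩
    simp only [Set.mem_insert_iff, Set.mem_singleton_iff, not_or, ← ne_eq] at h2
    rw [Set.mem_compl_iff, mem_Fx, Perm.mul_apply, hk.ho w h2.1 h2.2.1 h2.2.2]
    exact h1
  · intro w hw
    rw [mem_Fx] at *
    rw [Perm.mul_apply, hk.ho w, hw]
    · rintro rfl; exact hx hw
    · rintro rfl; exact hy hw
    · rintro rfl; exact hz hw
  · intro h
    apply hx
    apply h
    rw [mem_Fx, Perm.mul_apply, hk.ha, app_inv]

lemma step_dec (t : Perm X) (ht : (Fx t).Infinite) :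
    ∃ k ∈ FAlt X, (Fx (t * k)).Infinite ∧ Fx (t * k) ⊂ Fx t := by
  obtain ⟨x, hx⟩ := ht.nonempty
  obtain ⟨y, hy, hy'⟩ := ht.exists_notMem_finite (Set.toFinite {x})
  obtain ⟨z, hz, hz'⟩ := ht.exists_notMem_finite (Set.toFinite {x, y})
  simp only [Set.mem_insert_iff, Set.mem_singleton_iff, not_or, ← ne_eq] at hy' hz'
  rw [mem_Fx] at hx hy hz
  obtain ⟨k, hk⟩ := exists_is3 hy'.symm hz'.2.symm hz'.1.symm
  refine ⟨k, hk.mem, ?_, ?_, ?_⟩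
  · refine (ht.diff (Set.toFinite {x, y, z})).mono ?_
    rintro w ⟨h1, h2⟩
    simp only [Set.mem_insert_iff, Set.mem_singleton_iff, not_or, ← ne_eq] at h2
    rw [mem_Fx, Perm.mul_apply, hk.ho w h2.1 h2.2.1 h2.2.2]
    exact h1
  · intro w hw
    rw [mem_Fx] at *
    rw [Perm.mul_apply, hk.ho w] at hw
    · exact hw
    · rintro rfl; rw [hk.ha, hy] at hw; exact hk.ab hw.symm
    · rintro rfl; rw [hk.hb, hz] at hw; exact hk.bc hw.symm
    · rintro rfl; rw [hk.hc, hx] at hw; exact hk.ac hw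
  · intro h
    have := h hx
    rw [mem_Fx, Perm.mul_apply, hk.ha, hy] at this
    exact hy' this

lemma build (t : Perm X) (P : Perm X → Prop) (R : Perm X → Perm X → Prop)
    (hstep : ∀ t, P t → ∃ k ∈ FAlt X, P (t * k) ∧ R t (t * k)) (ht : P t) :
    ∃ g : ℕ → Perm X, (∀ n, g n ∈ FAlt X) ∧ ∀ n, R (t * g n) (t * g (n + 1)) := by
  choose! k hk hP hR using hstep
  let g : ℕ → Perm X := fun n => Nat.rec 1 (fun _ p => p * k (t * p)) n
  have g0 : g 0 = 1 := rfl
  have gs : ∀ n, g (n + 1) = g n * k (t * g n) := fun n => rfl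
  have gP : ∀ n, P (t * g n) := by
    intro n
    induction n with
    | zero => simpa [g0] using ht
    | succ n ih => rw [gs, ← mul_assoc]; exact hP _ ih
  refine ⟨g, fun n => ?_, fun n => ?_⟩
  · induction n with
    | zero => rw [g0]; exact one_mem _
    | succ n ih => rw [gs]; exact mul_mem ih (hk _ (gP n))
  · rw [gs, ← mul_assoc]
    exact hR _ (gP n)

lemma no_shift {h : Perm X} (hper : ∀ x, ∃ n, (h ^ (n + 1)) x = x) {A : Set X}
    (hA : ∀ x ∈ A, h x ∈ A) {x : X} (hx : h x ∈ A) : x ∈ A := by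
  obtain ⟨n, hn⟩ := hper x
  have : ∀ m, (h ^ (m + 1)) x ∈ A := by
    intro m
    induction m with
    | zero => simpa using hx
    | succ m ih => rw [pow_succ', Perm.mul_apply]; exact hA _ ih
  rw [← hn]
  exact this n

lemma twisted_equiv {G : Type*} [Group G] (φ : G ≃* G) : Equivalence (TwistedConj φ) where
  refl a := ⟨1, by simp⟩
  symm := by
    rintro a b ⟨x, rfl⟩
    exact ⟨x⁻¹, by simp [mul_assoc]⟩
  trans := by
    rintro a b c ⟨x, rfl⟩ ⟨y, rfl⟩
    exact ⟨x * y, by simp [mul_assoc]⟩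

theorem rinfinity_of_periodic [Infinite X] (H : Subgroup (Perm X)) (hH : FAlt X ≤ H)
    (hper : ∀ h ∈ H, ∀ x, ∃ n, (h ^ (n + 1)) x = x) : RInfinity H := by
  intro φ
  obtain ⟨s, hs⟩ := aut_conj hH φ
  have key : ∀ a b : H, TwistedConj φ a b → Fx (s⁻¹ * (a : Perm X)) ⊆ Fx (s⁻¹ * (b : Perm X)) →
      Fx (s⁻¹ * (b : Perm X)) ⊆ Fx (s⁻¹ * (a : Perm X)) := by
    rintro a b ⟨x, hx⟩ hab
    have e : s⁻¹ * (b : Perm X) = (x : Perm X)⁻¹ * (s⁻¹ * a) * x := by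
      rw [← hx]
      simp only [Subgroup.coe_mul, Subgroup.coe_inv, hs]
      group
    have iff : ∀ y, y ∈ Fx (s⁻¹ * (b : Perm X)) ↔ (x : Perm X) y ∈ Fx (s⁻¹ * (a : Perm X)) := by
      intro y
      rw [e, mem_Fx, mem_Fx, Perm.mul_apply, Perm.mul_apply, Perm.inv_eq_iff_eq]
    intro y hy
    refine no_shift (hper x x.2) (fun z hz => ?_) ((iff y).1 hy)
    exact (iff z).1 (hab hz)
  have fin : ∀ g : ℕ → Perm X, (∀ n, g n ∈ FAlt X) →
      (StrictMono (fun n => Fx (s⁻¹ * g n)) ∨ StrictAnti (fun n => Fx (s⁻¹ * g n))) →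
      Infinite (Quot (TwistedConj φ)) := by
    intro g hg hm
    have main : ∀ m n, m < n → Quot.mk (TwistedConj φ) ⟨g m, hH (hg m)⟩ ≠
        Quot.mk (TwistedConj φ) ⟨g n, hH (hg n)⟩ := by
      intro m n hmn he
      have tc : TwistedConj φ ⟨g m, hH (hg m)⟩ ⟨g n, hH (hg n)⟩ :=
        (twisted_equiv φ).eqvGen_iff.1 (Quot.eqvGen_exact he)
      rcases hm with hm | hm
      · have := hm hmn
        exact this.2 (key _ _ tc this.1)
      · have := hm hmn
        exact this.2 (key _ _ ((twisted_equiv φ).symm tc) this.1)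
    refine Infinite.of_injective (fun n => Quot.mk (TwistedConj φ) ⟨g n, hH (hg n)⟩) ?_
    intro m n he
    rcases lt_trichotomy m n with h | h | h
    · exact absurd he (main _ _ h)
    · exact h
    · exact absurd he.symm (main _ _ h)
  by_cases hF : (Fx s⁻¹).Infinite
  · obtain ⟨g, hg, hgR⟩ := build s⁻¹ (fun t => (Fx t).Infinite) (fun t t' => Fx t' ⊂ Fx t)
      step_dec hF
    exact fin g hg (.inr (strictAnti_nat_of_succ_lt hgR))
  · have hF' : (Fx s⁻¹)ᶜ.Infinite := (Set.not_infinite.1 hF).infinite_compl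
    obtain ⟨g, hg, hgR⟩ := build s⁻¹ (fun t => (Fx t)ᶜ.Infinite) (fun t t' => Fx t ⊂ Fx t')
      step_inc hF'
    exact fin g hg (.inl (strictMono_nat_of_lt_succ hgR))

/-- Permutations of a sigma type preserving all fibre unions over large finite index sets. -/
def almostFib {I : Type*} (Y : I → Type*) : Subgroup (Perm (Σ i, Y i)) where
  carrier := {h | ∃ F₀ : Set I, F₀.Finite ∧ ∀ F : Set I, F₀ ⊆ F → ∀ x, (h x).1 ∈ F ↔ x.1 ∈ F}
  one_mem' := ⟨∅, Set.finite_empty, fun F _ x => Iff.rfl⟩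
  mul_mem' := by
    rintro g h ⟨A, hA, hA'⟩ ⟨B, hB, hB'⟩
    refine ⟨A ∪ B, hA.union hB, fun F hF x => ?_⟩
    rw [Perm.mul_apply, hA' F (Set.subset_union_left.trans hF),
      hB' F (Set.subset_union_right.trans hF)]
  inv_mem' := by
    rintro g ⟨A, hA, hA'⟩
    refine ⟨A, hA, fun F hF x => ?_⟩
    rw [← hA' F hF (g⁻¹ x), app_inv]

lemma almostFib_periodic {I : Type*} (Y : I → Type*) [∀ i, Finite (Y i)]
    (h : Perm (Σ i, Y i)) (hh : h ∈ almostFib Y) (x : Σ i, Y i) :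
    ∃ n, (h ^ (n + 1)) x = x := by
  obtain ⟨A, hA, hA'⟩ := hh
  have hF := hA' (A ∪ {x.1}) Set.subset_union_left
  have mem : ∀ n : ℕ, ((h ^ n) x).1 ∈ A ∪ {x.1} := by
    intro n
    induction n with
    | zero => simp
    | succ n ih => rw [pow_succ', Perm.mul_apply, hF]; exact ih
  have hfin : (Sigma.fst ⁻¹' (A ∪ {x.1}) : Set (Σ i, Y i)).Finite := by
    have hAx : (A ∪ {x.1}).Finite := hA.union (Set.finite_singleton _)
    refine (hAx.biUnion (t := fun i => Set.range (fun y : Y i => (⟨i, y⟩ : Σ i, Y i)))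
      (fun i _ => Set.finite_range _)).subset ?_
    rintro ⟨i, y⟩ hi
    exact Set.mem_biUnion hi ⟨y, rfl⟩
  obtain ⟨m, n, hmn, he⟩ : ∃ m n : ℕ, m < n ∧ (h ^ m) x = (h ^ n) x := by
    by_contra hne
    push Not at hne
    have inj : Function.Injective (fun n : ℕ => (h ^ n) x) := by
      intro m n he
      rcases lt_trichotomy m n with h | h | h
      · exact absurd he (hne _ _ h)
      · exact h
      · exact absurd he.symm (hne _ _ h)
    exact Set.infinite_of_injective_forall_mem inj mem hfin
  obtain ⟨d, rfl⟩ := Nat.exists_eq_add_of_lt hmn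
  refine ⟨d, ?_⟩
  rw [add_assoc, pow_add, Perm.mul_apply] at he
  exact ((h ^ m).injective he).symm

lemma falt_le_almostFib {I : Type*} (Y : I → Type*) : FAlt (Σ i, Y i) ≤ almostFib Y := by
  refine (Subgroup.closure_le _).2 ?_
  intro h hh
  have hfin : {x | h x ≠ x}.Finite := Set.finite_of_ncard_ne_zero (by
    have : {x | h x ≠ x}.ncard = 3 := hh
    omega)
  refine ⟨Sigma.fst '' {x | h x ≠ x}, hfin.image _, fun F hF x => ?_⟩
  by_cases hx : h x = x
  · rw [hx]
  · have h1 : x.1 ∈ F := hF ⟨x, hx, rfl⟩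
    have h2 : (h x).1 ∈ F := hF ⟨h x, fun h' => hx (h.injective h'), rfl⟩
    exact ⟨fun _ => h1, fun _ => h2⟩

end final

end RInf

/-- For any infinite residually finite group `G` there is a faithful action of `G` on a set
`X` such that `⟨G, FAlt X⟩` has the `R∞` property. -/
theorem exists_faithful_action_rinfinity_of_residuallyFinite {G : Type u} [Group G]
    [Infinite G]
    (hrf : ∀ g : G, g ≠ 1 → ∃ (F : Type u) (_ : Group F) (_ : Finite F) (φ : G →* F),
      φ g ≠ 1) :
    ∃ (X : Type u) (ι : G →* Equiv.Perm X), Function.Injective ι ∧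
      RInfinity ↥(ι.range ⊔ FAlt X) := by
  classical
  let I : Type u := {N : Subgroup G // N.FiniteIndex}
  let Y : I → Type u := fun i => G ⧸ i.1
  have : ∀ i, Finite (Y i) := fun i => by
    have := i.2
    exact inferInstanceAs (Finite (G ⧸ i.1))
  let ι : G →* Equiv.Perm (Σ i, Y i) :=
    { toFun := fun g => Equiv.sigmaCongrRight (fun i => (MulAction.toPerm g : Equiv.Perm (G ⧸ i.1)))
      map_one' := by
        ext ⟨i, y⟩ : 1
        exact congrArg (Sigma.mk i) (one_smul G y)
      map_mul' := fun g h => by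
        ext ⟨i, y⟩ : 1
        exact congrArg (Sigma.mk i) (mul_smul g h y) }
  have hι : ∀ g i (y : G ⧸ i.1), ι g ⟨i, y⟩ = ⟨i, g • y⟩ := fun g i y => rfl
  have inj : Function.Injective ι := by
    rw [injective_iff_map_eq_one]
    intro g hg
    by_contra hne
    obtain ⟨F, _, _, φ, hφ⟩ := hrf g hne
    let i : I := ⟨φ.ker, inferInstance⟩
    have h1 := hι g i ((1 : G) : G ⧸ φ.ker)
    rw [hg] at h1
    have h2 : ((1 : G) : G ⧸ φ.ker) = g • ((1 : G) : G ⧸ φ.ker) := by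
      have := (Sigma.mk.inj_iff.1 h1).2
      exact eq_of_heq this
    have h3 : ((1 : G) : G ⧸ φ.ker) = ((g * 1 : G) : G ⧸ φ.ker) := h2
    rw [QuotientGroup.eq] at h3
    apply hφ
    simpa [MonoidHom.mem_ker] using h3
  have hinf : Infinite (Σ i, Y i) := by
    by_contra hfin
    rw [not_infinite_iff_finite] at hfin
    exact not_finite_iff_infinite.2 (inferInstanceAs (Infinite G)) (Finite.of_injective ι inj)
  refine ⟨Σ i, Y i, ι, inj, RInf.rinfinity_of_periodic _ le_sup_right ?_⟩
  intro h hh x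
  refine RInf.almostFib_periodic Y h ?_ x
  refine (sup_le ?_ (RInf.falt_le_almostFib Y) : ι.range ⊔ FAlt (Σ i, Y i) ≤ _) hh
  rintro _ ⟨g, rfl⟩
  exact ⟨∅, Set.finite_empty, fun F _ x => Iff.rfl⟩
end
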